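/- Let μ be a non-atomic self-conformal measure on ℝ^d associated to a self-conformal IFS Φ = {φ_a}_{a∈A} and a strictly positive probability vector (p_a)_{a∈A}. Then there exist a probability space (Ω, 𝒜, ℙ) and a family (μ_ω)_{ω∈Ω} of Borel probability measures on ℝ^d forming a disintegration of μ, and constants C₁, C₂, α > 0, such that: (i) μ(E) = ∫_Ω μ_ω(E) dℙ(ω) for every Borel set E ⊆ ℝ^d; (ii) for every ω ∈ Ω, every x in the support of μ_ω and every r > 0, μ_ω(B(x,2r)) ≤ C₁ μ_ω(B(x,r)); (iii) for every ω ∈ Ω, every x in the support of μ_ω, every y ∈ ℝ^d, every r with 0 < r ≤ 1 and every ε > 0, μ_ω(B(y, εr) ∩ B(x,r)) ≤ C₂ ε^α μ_ω(B(x,r)). -/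

import Mathlib

noncomputable section
open MeasureTheory Metric Filter Topology

variable {E : Type*} [NormedAddCommGroup E] [NormedSpace ℝ E]

/-- `f` is a contraction with ratio `r ∈ (0,1)`. -/
def IsContractionWith (r : ℝ) (f : E → E) : Prop :=
  0 < r ∧ r < 1 ∧ ∀ x y, ‖f x - f y‖ ≤ r * ‖x - y‖

/-- `f` is a contracting similarity with ratio `r ∈ (0,1)`. -/
def IsSimilarityWith (r : ℝ) (f : E → E) : Prop :=
  0 < r ∧ r < 1 ∧ ∀ x y, ‖f x - f y‖ = r * ‖x - y‖

/-- A self-conformal IFS. -/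
def IsSelfConformalIFS {A : Type*} [Fintype A] (φ : A → E → E) : Prop :=
  2 ≤ Fintype.card A ∧
  (∀ a, ∃ r, IsContractionWith r (φ a)) ∧
  (∀ a, ContDiff ℝ 1 (φ a)) ∧
  (∀ a x, 0 < ‖fderiv ℝ (φ a) x‖ ∧ ∀ v, ‖fderiv ℝ (φ a) x v‖ = ‖fderiv ℝ (φ a) x‖ * ‖v‖) ∧
  (∃ H α₀ : ℝ, 0 < H ∧ 0 < α₀ ∧ ∀ a x y,
    |‖fderiv ℝ (φ a) x‖ - ‖fderiv ℝ (φ a) y‖| ≤ H * ‖x - y‖ ^ α₀) ∧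
  (∃ a₁ a₂ x₁ x₂, φ a₁ x₁ = x₁ ∧ φ a₂ x₂ = x₂ ∧ x₁ ≠ x₂)

/-- A self-similar IFS. -/
def IsSelfSimilarIFS {A : Type*} [Fintype A] (φ : A → E → E) : Prop :=
  2 ≤ Fintype.card A ∧
  (∀ a, ∃ r, IsSimilarityWith r (φ a)) ∧
  (∃ a₁ a₂ x₁ x₂, φ a₁ x₁ = x₁ ∧ φ a₂ x₂ = x₂ ∧ x₁ ≠ x₂)

/-- The IFS is affinely irreducible: no (nonempty) proper affine subspace is preserved. -/
def AffinelyIrreducible {A : Type*} (φ : A → E → E) : Prop :=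
  ¬ ∃ W : AffineSubspace ℝ E, (W : Set E).Nonempty ∧ W ≠ ⊤ ∧
      ∀ a, φ a '' (W : Set E) ⊆ (W : Set E)

/-- Closed `ε`-neighbourhood of an affine subspace. -/
def affNbhd (W : AffineSubspace ℝ E) (ε : ℝ) : Set E :=
  {y | Metric.infDist y (W : Set E) ≤ ε}

/-- topological support of a measure -/
def msupport [MeasurableSpace E] (μ : Measure E) : Set E :=
  {x | ∀ r : ℝ, 0 < r → 0 < μ (Metric.ball x r)}

/-- distance between two sets -/
def setDist (S T : Set E) : ℝ := sInf (Set.image2 dist S T)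

/-- map corresponding to a finite word (as a list) -/
def listMap {A : Type*} (φ : A → E → E) : List A → E → E
  | [] => id
  | a :: l => φ a ∘ listMap φ l

/-- map corresponding to the first `n` letters of an infinite word -/
def wordMap {A : Type*} (φ : A → E → E) : ℕ → (ℕ → A) → E → E
  | 0, _ => id
  | n + 1, a => φ (a 0) ∘ wordMap φ n (fun k => a (k + 1))

/-- set of `Ψ`-well-approximable vectors in `ℝ^d` -/
def WApprox (d : ℕ) (Ψ : ℕ → ℝ) : Set (EuclideanSpace ℝ (Fin d)) :=
  {x | {pq : (Fin d → ℤ) × ℕ | 0 < pq.2 ∧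
        ∀ i, |x i - (pq.1 i : ℝ) / (pq.2 : ℝ)| ≤ Ψ pq.2}.Infinite}

/-- set of singular vectors in `ℝ^d` -/
def Sing (d : ℕ) : Set (EuclideanSpace ℝ (Fin d)) :=
  {x | ∀ c : ℝ, 0 < c → ∃ T : ℝ, 0 < T ∧ ∀ t : ℝ, T ≤ t →
    ∃ q : ℕ, 0 < q ∧ (q : ℝ) < t ∧
      ∀ i, |(q : ℝ) * x i - round ((q : ℝ) * x i)| ≤ c * t ^ (-(1 : ℝ) / (d : ℝ))}

/-!
Code points by infinite words, and cut the words into blocks of a fixed length `n`. As `μ` has no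
atoms, every block `w` has a partner `σ w` such that the images of the attractor under `w` and `σ w`
are at positive distance, uniformly in `w`. The law of a block can be realised by first choosing a
pair `{w, σ w}` at random and then tossing an independent biased coin to choose a member of the
pair. Conditionally on the sequence `ω` of pairs, `μ` becomes the law of a point coded by i.i.d.
coin tosses: a Bernoulli measure on a binary Cantor set whose pieces are, by bounded distortion,
geometrically controlled with constants independent of `ω`. Such a measure is doubling and
uniformly decaying.
-/

section ConformalMap

variable {F : Type*} [NormedAddCommGroup F] [NormedSpace ℝ F]

lemma exists_equiv_of_norm_apply_eq [FiniteDimensional ℝ F] {T : F →L[ℝ] F} (hT : 0 < ‖T‖)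
    (hconf : ∀ v, ‖T v‖ = ‖T‖ * ‖v‖) :
    ∃ e : F ≃L[ℝ] F, (e : F →L[ℝ] F) = T ∧ ‖(e.symm : F →L[ℝ] F)‖ ≤ ‖T‖⁻¹ := by
  have hinj : Function.Injective T := (injective_iff_map_eq_zero T).2 fun v hv => by
    simpa [hv, hT.ne'] using hconf v
  let l : F ≃ₗ[ℝ] F := LinearEquiv.ofInjectiveEndo (T : F →ₗ[ℝ] F) hinj
  exact ⟨.ofHomothety l ‖T‖ hT hconf, rfl, ContinuousLinearMap.opNorm_le_bound _ (by positivity)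
    fun v => (ContinuousLinearEquiv.homothety_inverse ‖T‖ hT l hconf v).le⟩

lemma norm_sub_le_of_segment_subset_target {K : ℝ} {x y : F} (Φ : OpenPartialHomeomorph F F)
    (hΦ : ∀ z ∈ Φ.source, ∃ e : F ≃L[ℝ] F,
      HasFDerivAt Φ (e : F →L[ℝ] F) z ∧ ‖(e.symm : F →L[ℝ] F)‖ ≤ K)
    (hx : x ∈ Φ.source) (hy : y ∈ Φ.source) (hseg : segment ℝ (Φ x) (Φ y) ⊆ Φ.target) :
    ‖x - y‖ ≤ K * ‖Φ x - Φ y‖ := by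
  have hder : ∀ q ∈ segment ℝ (Φ x) (Φ y), ∃ D : F →L[ℝ] F, HasFDerivAt Φ.symm D q ∧ ‖D‖ ≤ K := by
    intro q hq
    obtain ⟨e, he, hK⟩ := hΦ _ (Φ.map_target (hseg hq))
    exact ⟨e.symm, Φ.hasFDerivAt_symm (hseg hq) he, hK⟩
  choose! D hD hDK using hder
  have hmvt := (convex_segment (𝕜 := ℝ) (Φ x) (Φ y)).norm_image_sub_le_of_norm_hasFDerivWithin_le
    (fun q hq => (hD q hq).hasFDerivWithinAt) hDK
    (right_mem_segment ℝ (Φ x) (Φ y)) (left_mem_segment ℝ (Φ x) (Φ y))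
  rwa [Φ.left_inv hx, Φ.left_inv hy] at hmvt

lemma segment_subset_target_of_approximatesLinearOn [CompleteSpace F] {g : F → F} {e : F ≃L[ℝ] F}
    {x y : F} {N : ℝ} {c : NNReal} (hN : ‖(e : F →L[ℝ] F)‖ ≤ N)
    (hNinv : N ≤ ‖(e.symm : F →L[ℝ] F)‖⁻¹) (hcN : c ≤ N / 4) (hxy : x ≠ y)
    (happ : ApproximatesLinearOn g (e : F →L[ℝ] F) (ball x (2 * ‖x - y‖)) c)
    (hc : Subsingleton F ∨ c < ‖(e.symm : F →L[ℝ] F)‖₊⁻¹) :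
    segment ℝ (g x) (g y) ⊆ (happ.toOpenPartialHomeomorph g _ hc isOpen_ball).target := by
  have hτ : 0 < ‖x - y‖ := norm_pos_iff.2 (sub_ne_zero.2 hxy)
  have hball := happ.closedBall_subset_target hc isOpen_ball (b := x)
    (ε := 5 / 3 * ‖x - y‖) (by positivity) (closedBall_subset_ball (by linarith))
  have := c.coe_nonneg
  refine ((convex_closedBall _ _).segment_subset (mem_closedBall_self ?_) ?_).trans hball
  · have : 0 ≤ ‖(e.symm : F →L[ℝ] F)‖⁻¹ - c := by linarith
    positivity
  have hlin : ‖g y - g x - (e : F →L[ℝ] F) (y - x)‖ ≤ c * ‖y - x‖ :=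
    happ y (by rw [mem_ball, dist_comm, dist_eq_norm]; linarith) x (mem_ball_self (by linarith))
  rw [mem_closedBall, dist_eq_norm]
  calc ‖g y - g x‖
      ≤ ‖g y - g x - (e : F →L[ℝ] F) (y - x)‖ + ‖(e : F →L[ℝ] F) (y - x)‖ := by
        simpa using norm_add_le (g y - g x - (e : F →L[ℝ] F) (y - x)) ((e : F →L[ℝ] F) (y - x))
    _ ≤ c * ‖y - x‖ + N * ‖y - x‖ :=
        add_le_add hlin ((e : F →L[ℝ] F).le_of_opNorm_le hN _)
    _ = (c + N) * ‖x - y‖ := by rw [norm_sub_rev y x]; ring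
    _ ≤ ((‖(e.symm : F →L[ℝ] F)‖⁻¹ - c) * (5 / 3)) * ‖x - y‖ := by gcongr; linarith
    _ = (‖(e.symm : F →L[ℝ] F)‖⁻¹ - c) * (5 / 3 * ‖x - y‖) := by ring

variable {g : F → F}

/- Conformality only controls the norm of the derivative, so `g x - g y` cannot be compared with
`fderiv ℝ g x (x - y)` directly: the bound comes from the mean value inequality for the local
inverse, whose domain contains the segment from `g x` to `g y`. -/
lemma mul_norm_sub_le_of_conformal [FiniteDimensional ℝ F] (hg : Differentiable ℝ g)
    (hpos : ∀ x, 0 < ‖fderiv ℝ g x‖) (hconf : ∀ x v, ‖fderiv ℝ g x v‖ = ‖fderiv ℝ g x‖ * ‖v‖)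
    {x y : F} {m : ℝ} (hm0 : 0 < m)
    (hclose : ∀ z ∈ ball x (2 * ‖x - y‖), ‖fderiv ℝ g z - fderiv ℝ g x‖ ≤ ‖fderiv ℝ g x‖ / 4)
    (hm : ∀ z ∈ ball x (2 * ‖x - y‖), m ≤ ‖fderiv ℝ g z‖) :
    m * ‖x - y‖ ≤ ‖g x - g y‖ := by
  have : CompleteSpace F := FiniteDimensional.complete ℝ F
  rcases eq_or_ne x y with rfl | hxy
  · simp
  have : Nontrivial F := ⟨x, y, hxy⟩
  have hτ : 0 < ‖x - y‖ := norm_pos_iff.2 (sub_ne_zero.2 hxy)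
  obtain ⟨e, he, hes⟩ := exists_equiv_of_norm_apply_eq (hpos x) (hconf x)
  have hNinv : ‖fderiv ℝ g x‖ ≤ ‖(e.symm : F →L[ℝ] F)‖⁻¹ :=
    (le_inv_comm₀ (hpos x) e.norm_symm_pos).2 hes
  let c : NNReal := ⟨‖fderiv ℝ g x‖ / 4, by positivity⟩
  have happ : ApproximatesLinearOn g (e : F →L[ℝ] F) (ball x (2 * ‖x - y‖)) c := by
    rw [he]
    exact fun z hz w hw => (convex_ball x _).norm_image_sub_le_of_norm_hasFDerivWithin_le'
      (fun z _ => (hg z).hasFDerivAt.hasFDerivWithinAt) hclose hw hz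
  have hc : Subsingleton F ∨ c < ‖(e.symm : F →L[ℝ] F)‖₊⁻¹ := by
    refine Or.inr (NNReal.coe_lt_coe.1 (lt_of_lt_of_le ?_ hNinv))
    exact div_lt_self (hpos x) (by norm_num)
  have hx : x ∈ ball x (2 * ‖x - y‖) := mem_ball_self (by linarith)
  have hy : y ∈ ball x (2 * ‖x - y‖) := by rw [mem_ball, dist_comm, dist_eq_norm]; linarith
  have hinv := norm_sub_le_of_segment_subset_target (K := m⁻¹) (x := x) (y := y)
    (happ.toOpenPartialHomeomorph g _ hc isOpen_ball) (fun z hz => ?_) hx hy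
    (segment_subset_target_of_approximatesLinearOn (he ▸ le_rfl) hNinv le_rfl hxy happ hc)
  · rwa [inv_mul_eq_div, le_div_iff₀' hm0] at hinv
  · obtain ⟨e', he', hes'⟩ := exists_equiv_of_norm_apply_eq (hpos z) (hconf z)
    exact ⟨e', he' ▸ (hg z).hasFDerivAt, hes'.trans (inv_anti₀ hm0 (hm z hz))⟩

end ConformalMap

section HolderDistortion

/-- `g` is, on `K`, a similarity of pointwise ratio `lam x` up to the factor `exp (B * r ^ α)` at
scale `r`. The lower bound on distances is only required at scales at most `η`, since conformal
maps need not be injective. -/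
structure HasHolderDistortion {X : Type*} [PseudoMetricSpace X] (K : Set X) (B α η : ℝ)
    (g : X → X) (lam : X → ℝ) : Prop where
  pos : ∀ x ∈ K, 0 < lam x
  ratio_le : ∀ x ∈ K, ∀ y ∈ K, lam y ≤ lam x * Real.exp (B * dist x y ^ α)
  dist_le : ∀ x ∈ K, ∀ y ∈ K, dist (g x) (g y) ≤ lam x * Real.exp (B * dist x y ^ α) * dist x y
  le_dist : ∀ x ∈ K, ∀ y ∈ K, dist x y ≤ η →
    lam x * Real.exp (-(B * dist x y ^ α)) * dist x y ≤ dist (g x) (g y)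

lemma HasHolderDistortion.mono {X : Type*} [PseudoMetricSpace X] {K : Set X} {B B' α η η' : ℝ}
    {g : X → X} {lam : X → ℝ} (h : HasHolderDistortion K B α η g lam) (hB : B ≤ B') (hη : η' ≤ η) :
    HasHolderDistortion K B' α η' g lam where
  pos := h.pos
  ratio_le x hx y hy := (h.ratio_le x hx y hy).trans (by have := h.pos x hx; gcongr)
  dist_le x hx y hy := (h.dist_le x hx y hy).trans (by have := h.pos x hx; gcongr)
  le_dist x hx y hy hxy :=
    le_trans (by have := h.pos x hx; gcongr) (h.le_dist x hx y hy (hxy.trans hη))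

lemma exists_le_mul_exp_of_holder {X : Type*} [PseudoMetricSpace X] {K : Set X} (hK : IsCompact K)
    {f : X → ℝ} (hf : ContinuousOn f K) (hpos : ∀ x ∈ K, 0 < f x) {H α : ℝ} (hH : 0 ≤ H)
    (hol : ∀ x y, |f x - f y| ≤ H * dist x y ^ α) :
    ∃ B, 0 ≤ B ∧ ∀ x ∈ K, ∀ y, f y ≤ f x * Real.exp (B * dist x y ^ α) := by
  obtain ⟨m, hm0, hm⟩ := hK.exists_forall_le' hf hpos
  refine ⟨H / m, by positivity, fun x hx y => ?_⟩
  have hexp := Real.add_one_le_exp (H / m * dist x y ^ α)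
  calc f y ≤ f x + H * dist x y ^ α := by linarith [(abs_le.1 (hol x y)).1]
    _ = f x + m * (H / m * dist x y ^ α) := by field_simp
    _ ≤ f x + f x * (H / m * dist x y ^ α) := by gcongr; exact hm x hx
    _ = f x * (H / m * dist x y ^ α + 1) := by ring
    _ ≤ f x * Real.exp (H / m * dist x y ^ α) := by have := hpos x hx; gcongr

variable {F : Type*} [NormedAddCommGroup F] [NormedSpace ℝ F] {g : F → F}

lemma dist_image_le_mul_exp (hg : Differentiable ℝ g) {B α : ℝ} (hB : 0 ≤ B) (hα : 0 ≤ α) {x y : F}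
    (hBx : ∀ z, ‖fderiv ℝ g z‖ ≤ ‖fderiv ℝ g x‖ * Real.exp (B * dist x z ^ α)) :
    dist (g x) (g y) ≤ ‖fderiv ℝ g x‖ * Real.exp (B * dist x y ^ α) * dist x y := by
  rw [dist_eq_norm (g x), dist_eq_norm x y]
  refine (convex_segment x y).norm_image_sub_le_of_norm_fderiv_le (𝕜 := ℝ) (fun z _ => hg z)
    (fun z hz => (hBx z).trans ?_) (right_mem_segment ℝ x y) (left_mem_segment ℝ x y)
  have : dist x z ≤ ‖x - y‖ := by
    simpa only [dist_eq_norm, norm_sub_rev x] using norm_sub_le_of_mem_segment hz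
  gcongr

lemma exists_le_dist_image_of_conformal [FiniteDimensional ℝ F] (hg : ContDiff ℝ 1 g)
    (hpos : ∀ x, 0 < ‖fderiv ℝ g x‖) (hconf : ∀ x v, ‖fderiv ℝ g x v‖ = ‖fderiv ℝ g x‖ * ‖v‖)
    {R B α : ℝ} (hB : 0 ≤ B) (hα : 0 ≤ α) (hBR : ∀ x ∈ closedBall (0 : F) (R + 1), ∀ y,
      ‖fderiv ℝ g y‖ ≤ ‖fderiv ℝ g x‖ * Real.exp (B * dist x y ^ α)) :
    ∃ η > 0, ∀ x ∈ closedBall (0 : F) R, ∀ y, dist x y ≤ η →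
      ‖fderiv ℝ g x‖ * Real.exp (-(B * 2 ^ α * dist x y ^ α)) * dist x y ≤ dist (g x) (g y) := by
  have : ProperSpace F := FiniteDimensional.proper ℝ F
  have hcont : Continuous (fderiv ℝ g) := hg.continuous_fderiv one_ne_zero
  have hcomp : IsCompact (closedBall (0 : F) (R + 1)) := isCompact_closedBall _ _
  obtain ⟨m, hm0, hm⟩ := hcomp.exists_forall_le' hcont.norm.continuousOn fun x _ => hpos x
  obtain ⟨δ, hδ, hclose⟩ := Metric.uniformContinuousOn_iff_le.1
    (hcomp.uniformContinuousOn_of_continuous hcont.continuousOn) (m / 4) (by positivity)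
  refine ⟨min (1 / 2) (δ / 2), by positivity, fun x hx y hxy => ?_⟩
  obtain ⟨hxy₁, hxy₂⟩ := le_min_iff.1 hxy
  have hxR : x ∈ closedBall (0 : F) (R + 1) := closedBall_subset_closedBall (by linarith) hx
  have hball : ∀ z ∈ ball x (2 * ‖x - y‖), z ∈ closedBall (0 : F) (R + 1) := fun z hz => by
    rw [← dist_eq_norm, mem_ball] at hz
    rw [mem_closedBall] at hx ⊢
    linarith [dist_triangle z x 0]
  rw [dist_eq_norm (g x), dist_eq_norm x y]
  refine mul_norm_sub_le_of_conformal (hg.differentiable one_ne_zero) hpos hconf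
    (by have := hpos x; positivity) (fun z hz => ?_) fun z hz => ?_
  · rw [← dist_eq_norm]
    refine (hclose z (hball z hz) x hxR ?_).trans (by linarith [hm x hxR])
    rw [← dist_eq_norm, mem_ball] at hz
    linarith
  · rw [Real.exp_neg, ← div_eq_mul_inv, div_le_iff₀ (Real.exp_pos _)]
    refine (hBR z (hball z hz) x).trans ?_
    rw [mul_assoc B, ← Real.mul_rpow (by norm_num) (norm_nonneg _)]
    have := (mem_ball.1 hz).le
    gcongr

lemma exists_hasHolderDistortion [FiniteDimensional ℝ F] (hg : ContDiff ℝ 1 g)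
    (hpos : ∀ x, 0 < ‖fderiv ℝ g x‖) (hconf : ∀ x v, ‖fderiv ℝ g x v‖ = ‖fderiv ℝ g x‖ * ‖v‖)
    {H α : ℝ} (hH : 0 ≤ H) (hα : 0 ≤ α)
    (hol : ∀ x y, |‖fderiv ℝ g x‖ - ‖fderiv ℝ g y‖| ≤ H * dist x y ^ α) (R : ℝ) :
    ∃ B η, 0 ≤ B ∧ 0 < η ∧
      HasHolderDistortion (closedBall (0 : F) R) B α η g fun x => ‖fderiv ℝ g x‖ := by
  have : ProperSpace F := FiniteDimensional.proper ℝ F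
  have hcont : Continuous fun x => ‖fderiv ℝ g x‖ := (hg.continuous_fderiv one_ne_zero).norm
  obtain ⟨B, hB, hBR⟩ := exists_le_mul_exp_of_holder (isCompact_closedBall (0 : F) (R + 1))
    hcont.continuousOn (fun x _ => hpos x) hH hol
  obtain ⟨η, hη, hlower⟩ := exists_le_dist_image_of_conformal hg hpos hconf hB hα hBR
  have hR : ∀ x ∈ closedBall (0 : F) R, x ∈ closedBall (0 : F) (R + 1) :=
    fun _ hx => closedBall_subset_closedBall (by linarith) hx
  have hBB : B ≤ B * 2 ^ α :=
    le_mul_of_one_le_right hB (Real.one_le_rpow (by norm_num) hα)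
  exact ⟨B * 2 ^ α, η, by positivity, hη,
    { pos := fun x _ => hpos x
      ratio_le := fun x hx y _ => (hBR x (hR x hx) y).trans (by gcongr)
      dist_le := fun x hx y _ => (dist_image_le_mul_exp (hg.differentiable one_ne_zero) hB hα
        (hBR x (hR x hx))).trans (by gcongr)
      le_dist := fun x hx y _ => hlower x hx y }⟩

end HolderDistortion

section Words

variable {A X : Type*} {φ : A → X → X}

lemma listMap_append (φ : A → X → X) (l l' : List A) :
    listMap φ (l ++ l') = listMap φ l ∘ listMap φ l' := by
  induction l with
  | nil => rfl
  | cons a l ih => simp only [List.cons_append, listMap, ih, Function.comp_assoc]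

lemma listMap_flatMap {Y : Type*} {f : Y → X → X} {wd : Y → List A}
    (hf : ∀ y, f y = listMap φ (wd y)) (l : List Y) :
    listMap f l = listMap φ (l.flatMap wd) := by
  induction l with
  | nil => rfl
  | cons y l ih => simp only [List.flatMap_cons, listMap_append, listMap, ih, hf]

lemma wordMap_eq_listMap (φ : A → X → X) (n : ℕ) (z : ℕ → A) :
    wordMap φ n z = listMap φ (List.ofFn fun i : Fin n => z i) := by
  induction n generalizing z with
  | zero => rfl
  | succ n ih => simp only [wordMap, ih, List.ofFn_succ, listMap]; rfl

lemma wordMap_add (φ : A → X → X) (n m : ℕ) (z : ℕ → A) :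
    wordMap φ (n + m) z = wordMap φ n z ∘ wordMap φ m fun i => z (n + i) := by
  induction n generalizing z with
  | zero => simp only [wordMap, Function.id_comp, zero_add]
  | succ n ih =>
    simp only [Nat.add_right_comm n 1, wordMap, ih, Function.comp_assoc]

lemma wordMap_congr {n : ℕ} {z z' : ℕ → A} (h : ∀ i < n, z i = z' i) :
    wordMap φ n z = wordMap φ n z' := by
  simp only [wordMap_eq_listMap, h _ (Fin.is_lt _)]

lemma mapsTo_listMap {K : Set X} (hK : ∀ a, Set.MapsTo (φ a) K K) (l : List A) :
    Set.MapsTo (listMap φ l) K K := by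
  induction l with
  | nil => exact Set.mapsTo_id K
  | cons a l ih => exact (hK a).comp ih

lemma mapsTo_wordMap {K : Set X} (hK : ∀ a, Set.MapsTo (φ a) K K) (n : ℕ) (z : ℕ → A) :
    Set.MapsTo (wordMap φ n z) K K :=
  wordMap_eq_listMap φ n z ▸ mapsTo_listMap hK _

lemma lipschitzWith_listMap [PseudoEMetricSpace X] {ρ : NNReal} (hφ : ∀ a, LipschitzWith ρ (φ a))
    (l : List A) : LipschitzWith (ρ ^ l.length) (listMap φ l) := by
  induction l with
  | nil => exact LipschitzWith.id
  | cons a l ih =>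
    rw [List.length_cons, pow_succ']
    exact (hφ a).comp ih

lemma lipschitzWith_wordMap [PseudoEMetricSpace X] {ρ : NNReal} (hφ : ∀ a, LipschitzWith ρ (φ a))
    (n : ℕ) (z : ℕ → A) : LipschitzWith (ρ ^ n) (wordMap φ n z) := by
  simpa only [wordMap_eq_listMap, List.length_ofFn] using
    lipschitzWith_listMap hφ (List.ofFn fun i : Fin n => z i)

end Words

section BoundedDistortion

variable {X : Type*} [PseudoMetricSpace X] {K : Set X} {B C α η M : ℝ} {ρ : NNReal} {f g : X → X}

lemma HasHolderDistortion.id (hC : 0 ≤ C) :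
    HasHolderDistortion K C α η id fun _ => 1 where
  pos _ _ := one_pos
  ratio_le x _ y _ := by simpa using Real.one_le_exp (by positivity)
  dist_le x _ y _ := by
    simpa using le_mul_of_one_le_left dist_nonneg (Real.one_le_exp (x := C * dist x y ^ α)
      (by positivity))
  le_dist x _ y _ _ := by
    rw [one_mul, id_eq, id_eq]
    refine mul_le_of_le_one_left dist_nonneg (Real.exp_le_one_iff.2 (neg_nonpos.2 ?_))
    positivity

lemma HasHolderDistortion.comp {lam mu : X → ℝ} (hg : HasHolderDistortion K C α η g lam)
    (hf : HasHolderDistortion K B α η f mu) (hK : Set.MapsTo f K K) (hρ : LipschitzWith ρ f)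
    (hρ1 : ρ ≤ 1) (hC : 0 ≤ C) (hα : 0 ≤ α) :
    HasHolderDistortion K (C * ρ ^ α + B) α η (g ∘ f) fun x => lam (f x) * mu x := by
  have hCρ : ∀ x y, C * dist (f x) (f y) ^ α ≤ C * ρ ^ α * dist x y ^ α := fun x y => by
    rw [mul_assoc, ← Real.mul_rpow ρ.coe_nonneg dist_nonneg]
    have := hρ.dist_le_mul x y
    gcongr
  refine ⟨fun x hx => mul_pos (hg.pos _ (hK hx)) (hf.pos x hx), fun x hx y hy => ?_,
    fun x hx y hy => ?_, fun x hx y hy hxy => ?_⟩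
  all_goals
    have hlam := hg.pos _ (hK hx)
    have hmu := hf.pos x hx
    have hmu' := hf.pos y hy
  · calc lam (f y) * mu y
        ≤ lam (f x) * Real.exp (C * dist (f x) (f y) ^ α)
          * (mu x * Real.exp (B * dist x y ^ α)) :=
          mul_le_mul (hg.ratio_le _ (hK hx) _ (hK hy)) (hf.ratio_le x hx y hy) hmu'.le
            (by positivity)
      _ ≤ lam (f x) * Real.exp (C * ρ ^ α * dist x y ^ α)
          * (mu x * Real.exp (B * dist x y ^ α)) := by gcongr _ * Real.exp ?_ * _; exact hCρ x y
      _ = lam (f x) * mu x * Real.exp ((C * ρ ^ α + B) * dist x y ^ α) := by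
          rw [add_mul, Real.exp_add]; ring
  · calc dist (g (f x)) (g (f y))
        ≤ lam (f x) * Real.exp (C * dist (f x) (f y) ^ α) * dist (f x) (f y) :=
          hg.dist_le _ (hK hx) _ (hK hy)
      _ ≤ lam (f x) * Real.exp (C * ρ ^ α * dist x y ^ α)
          * (mu x * Real.exp (B * dist x y ^ α) * dist x y) := by
          gcongr _ * Real.exp ?_ * ?_
          · exact hCρ x y
          · exact hf.dist_le x hx y hy
      _ = lam (f x) * mu x * Real.exp ((C * ρ ^ α + B) * dist x y ^ α) * dist x y := by
          rw [add_mul, Real.exp_add]; ring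
  · have hfxy : dist (f x) (f y) ≤ η :=
      (hρ.dist_le_mul_of_le hxy).trans
        (mul_le_of_le_one_left (dist_nonneg.trans hxy) (NNReal.coe_le_one.2 hρ1))
    calc lam (f x) * mu x * Real.exp (-((C * ρ ^ α + B) * dist x y ^ α)) * dist x y
        = lam (f x) * Real.exp (-(C * ρ ^ α * dist x y ^ α))
          * (mu x * Real.exp (-(B * dist x y ^ α)) * dist x y) := by
          rw [add_mul, neg_add, Real.exp_add]; ring
      _ ≤ lam (f x) * Real.exp (-(C * dist (f x) (f y) ^ α)) * dist (f x) (f y) := by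
          gcongr _ * Real.exp (-?_) * ?_
          · exact hCρ x y
          · exact hf.le_dist x hx y hy hxy
      _ ≤ dist (g (f x)) (g (f y)) := hg.le_dist _ (hK hx) _ (hK hy) hfxy

/- The constant `C = B / (1 - ρ ^ α)` is the fixed point of `C ↦ C * ρ ^ α + B`: appending a letter
on the inside of a word does not increase the distortion. -/
lemma exists_hasHolderDistortion_listMap {A : Type*} {φ : A → X → X} {lam : A → X → ℝ}
    (h : ∀ a, HasHolderDistortion K B α η (φ a) (lam a)) (hK : ∀ a, Set.MapsTo (φ a) K K)
    (hρ : ∀ a, LipschitzWith ρ (φ a)) (hρ1 : ρ < 1) (hB : 0 ≤ B) (hα : 0 < α) (l : List A) :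
    ∃ mu, HasHolderDistortion K (B / (1 - ρ ^ α)) α η (listMap φ l) mu := by
  have hρα : 0 < 1 - (ρ : ℝ) ^ α := sub_pos.2 (Real.rpow_lt_one ρ.coe_nonneg hρ1 hα)
  have hC : 0 ≤ B / (1 - ρ ^ α) := by positivity
  induction l using List.reverseRecOn with
  | nil => exact ⟨_, .id hC⟩
  | append_singleton l a ih =>
    obtain ⟨mu, hmu⟩ := ih
    have hfix : B / (1 - ρ ^ α) * ρ ^ α + B = B / (1 - ρ ^ α) := by field_simp; ring
    rw [listMap_append]
    exact ⟨_, hfix ▸ hmu.comp (h a) (hK a) (hρ a) hρ1.le hC hα.le⟩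

/-- `g` is a similarity of ratio `ℓ` up to the factor `M` on `K`. As in `HasHolderDistortion`, the
lower bound is only required at scales at most `η`. -/
structure IsQuasiSimilarityOn (K : Set X) (M η : ℝ) (g : X → X) (ℓ : ℝ) : Prop where
  pos : 0 < ℓ
  dist_le : ∀ x ∈ K, ∀ y ∈ K, dist (g x) (g y) ≤ M * ℓ * dist x y
  le_dist : ∀ x ∈ K, ∀ y ∈ K, dist x y ≤ η → ℓ * dist x y ≤ M * dist (g x) (g y)

/-- All finite compositions of the maps `φ a` are quasi-similarities, with uniform constants. -/
def HasBoundedDistortion {A : Type*} (K : Set X) (M η : ℝ) (φ : A → X → X) : Prop :=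
  ∀ l : List A, ∃ ℓ, IsQuasiSimilarityOn K M η (listMap φ l) ℓ

lemma HasBoundedDistortion.of_words {A Y : Type*} {φ : A → X → X} {f : Y → X → X}
    {wd : Y → List A} (h : HasBoundedDistortion K M η φ) (hf : ∀ y, f y = listMap φ (wd y)) :
    HasBoundedDistortion K M η f :=
  fun l => listMap_flatMap hf l ▸ h (l.flatMap wd)

lemma HasHolderDistortion.isQuasiSimilarityOn {lam : X → ℝ} (h : HasHolderDistortion K C α η g lam)
    (hC : 0 ≤ C) (hα : 0 ≤ α) (hK : Bornology.IsBounded K) {x₀ : X} (hx₀ : x₀ ∈ K) :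
    IsQuasiSimilarityOn K (Real.exp (2 * (C * diam K ^ α))) η g (lam x₀) := by
  have hpos := h.pos x₀ hx₀
  have hexp : Real.exp (2 * (C * diam K ^ α))
      = Real.exp (C * diam K ^ α) * Real.exp (C * diam K ^ α) := by rw [two_mul, Real.exp_add]
  have hdiam : ∀ x ∈ K, ∀ y ∈ K, C * dist x y ^ α ≤ C * diam K ^ α := fun x hx y hy => by
    have := dist_le_diam_of_mem hK hx hy
    gcongr
  have hratio : ∀ x ∈ K, ∀ y ∈ K, lam y ≤ lam x * Real.exp (C * diam K ^ α) := fun x hx y hy =>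
    (h.ratio_le x hx y hy).trans
      (mul_le_mul_of_nonneg_left (Real.exp_le_exp.2 (hdiam x hx y hy)) (h.pos x hx).le)
  refine ⟨hpos, fun x hx y hy => ?_, fun x hx y hy hxy => ?_⟩
  · calc dist (g x) (g y) ≤ lam x * Real.exp (C * dist x y ^ α) * dist x y := h.dist_le x hx y hy
      _ ≤ lam x₀ * Real.exp (C * diam K ^ α) * Real.exp (C * diam K ^ α) * dist x y := by
          gcongr ?_ * Real.exp ?_ * _
          · exact hratio x₀ hx₀ x hx
          · exact hdiam x hx y hy
      _ = Real.exp (2 * (C * diam K ^ α)) * lam x₀ * dist x y := by rw [hexp]; ring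
  · have hx' := h.pos x hx
    have hcancel : Real.exp (C * diam K ^ α) * Real.exp (-(C * diam K ^ α)) = 1 := by
      rw [← Real.exp_add, add_neg_cancel, Real.exp_zero]
    calc lam x₀ * dist x y
        ≤ lam x * Real.exp (C * diam K ^ α) * dist x y := by gcongr; exact hratio x hx x₀ hx₀
      _ = Real.exp (2 * (C * diam K ^ α))
          * (lam x * Real.exp (-(C * diam K ^ α)) * dist x y) := by
          rw [hexp]
          linear_combination (-(lam x * dist x y * Real.exp (C * diam K ^ α))) * hcancel
      _ ≤ Real.exp (2 * (C * diam K ^ α))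
          * (lam x * Real.exp (-(C * dist x y ^ α)) * dist x y) := by
          gcongr _ * (_ * Real.exp (-?_) * _)
          exact hdiam x hx y hy
      _ ≤ Real.exp (2 * (C * diam K ^ α)) * dist (g x) (g y) := by
          gcongr
          exact h.le_dist x hx y hy hxy

namespace IsQuasiSimilarityOn

variable {ℓ ℓ' ℓf : ℝ} {x y : X}

lemma ratio_comp_le (hgf : IsQuasiSimilarityOn K M η (g ∘ f) ℓ')
    (hg : IsQuasiSimilarityOn K M η g ℓ)
    (hK : Set.MapsTo f K K) (hρ : LipschitzWith ρ f) (hM : 0 ≤ M) (hx : x ∈ K) (hy : y ∈ K)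
    (hxy : 0 < dist x y) (hη : dist x y ≤ η) : ℓ' ≤ M ^ 2 * ρ * ℓ := by
  have hpos := hg.pos
  refine le_of_mul_le_mul_right ?_ hxy
  calc ℓ' * dist x y ≤ M * dist (g (f x)) (g (f y)) := hgf.le_dist x hx y hy hη
    _ ≤ M * (M * ℓ * (ρ * dist x y)) := by
        gcongr
        refine (hg.dist_le _ (hK hx) _ (hK hy)).trans ?_
        gcongr
        exact hρ.dist_le_mul x y
    _ = M ^ 2 * ρ * ℓ * dist x y := by ring

lemma mul_le_ratio_comp (hgf : IsQuasiSimilarityOn K M η (g ∘ f) ℓ')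
    (hg : IsQuasiSimilarityOn K M η g ℓ) (hf : IsQuasiSimilarityOn K M η f ℓf)
    (hK : Set.MapsTo f K K) (hρ : LipschitzWith ρ f) (hρ1 : ρ ≤ 1) (hM : 0 ≤ M) (hx : x ∈ K)
    (hy : y ∈ K) (hxy : 0 < dist x y) (hη : dist x y ≤ η) : ℓ * ℓf ≤ M ^ 3 * ℓ' := by
  have hpos := hg.pos
  have hfxy : dist (f x) (f y) ≤ η := (hρ.dist_le_mul_of_le hη).trans
    (mul_le_of_le_one_left (dist_nonneg.trans hη) (NNReal.coe_le_one.2 hρ1))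
  refine le_of_mul_le_mul_right ?_ hxy
  calc ℓ * ℓf * dist x y = ℓ * (ℓf * dist x y) := by ring
    _ ≤ ℓ * (M * dist (f x) (f y)) := mul_le_mul_of_nonneg_left (hf.le_dist x hx y hy hη) hpos.le
    _ = M * (ℓ * dist (f x) (f y)) := by ring
    _ ≤ M * (M * (M * ℓ' * dist x y)) := by
        refine mul_le_mul_of_nonneg_left ((hg.le_dist _ (hK hx) _ (hK hy) hfxy).trans ?_) hM
        gcongr
        exact hgf.dist_le x hx y hy
    _ = M ^ 3 * ℓ' * dist x y := by ring

lemma one_le_ratio_id (h : IsQuasiSimilarityOn K M η id ℓ) (hx : x ∈ K) (hy : y ∈ K)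
    (hxy : 0 < dist x y) : 1 ≤ M * ℓ :=
  le_of_mul_le_mul_right ((one_mul _).trans_le (h.dist_le x hx y hy)) hxy

end IsQuasiSimilarityOn

end BoundedDistortion

section SelfConformal

variable {A F : Type*} [Fintype A] [NormedAddCommGroup F] [NormedSpace ℝ F] {φ : A → F → F}

lemma IsSelfConformalIFS.nonempty (hφ : IsSelfConformalIFS φ) : Nonempty A :=
  Fintype.card_pos_iff.1 (two_pos.trans_le hφ.1)

lemma IsSelfConformalIFS.exists_contractingWith (hφ : IsSelfConformalIFS φ) :
    ∃ ρ, ∀ a, ContractingWith ρ (φ a) := by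
  have := hφ.nonempty
  choose r hr0 hr1 hr using hφ.2.1
  obtain ⟨b, hb⟩ := Finite.exists_max r
  refine ⟨⟨r b, (hr0 b).le⟩, fun a => ⟨hr1 b, LipschitzWith.of_dist_le_mul fun x y => ?_⟩⟩
  rw [dist_eq_norm, dist_eq_norm]
  exact (hr a x y).trans (mul_le_mul_of_nonneg_right (hb a) (norm_nonneg _))

lemma IsSelfConformalIFS.exists_hasBoundedDistortion [FiniteDimensional ℝ F]
    (hφ : IsSelfConformalIFS φ) {R : ℝ} (hR : 0 ≤ R)
    (hK : ∀ a, Set.MapsTo (φ a) (closedBall 0 R) (closedBall 0 R)) :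
    ∃ M η, 0 < M ∧ 0 < η ∧ HasBoundedDistortion (closedBall 0 R) M η φ := by
  have := hφ.nonempty
  obtain ⟨ρ, hρ⟩ := hφ.exists_contractingWith
  obtain ⟨-, -, hC1, hconf, ⟨H, α, hH, hα, hol⟩, -⟩ := hφ
  simp only [← dist_eq_norm] at hol
  choose B η hB hη hdist using fun a => exists_hasHolderDistortion (hC1 a)
    (fun x => (hconf a x).1) (fun x => (hconf a x).2) hH.le hα.le (hol a) R
  obtain ⟨b, hb⟩ := Finite.exists_max B
  obtain ⟨e, he⟩ := Finite.exists_min η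
  have hC : 0 ≤ B b / (1 - (ρ : ℝ) ^ α) :=
    div_nonneg (hB b) (sub_nonneg.2 (Real.rpow_le_one ρ.coe_nonneg (hρ b).1.le hα.le))
  refine ⟨Real.exp (2 * (B b / (1 - ρ ^ α) * diam (closedBall (0 : F) R) ^ α)), η e,
    Real.exp_pos _, hη e, fun l => ?_⟩
  obtain ⟨mu, hmu⟩ := exists_hasHolderDistortion_listMap
    (fun a => (hdist a).mono (hb a) (he a)) hK (fun a => (hρ a).2) (hρ b).1 (hB b) hα l
  exact ⟨_, hmu.isQuasiSimilarityOn hC hα.le isBounded_closedBall (mem_closedBall_self hR)⟩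

end SelfConformal

section Contraction

lemma exists_mapsTo_closedBall {A F : Type*} [Finite A] [NormedAddCommGroup F] {φ : A → F → F}
    {ρ : NNReal} (hφ : ∀ a, ContractingWith ρ (φ a)) :
    ∃ R, 0 ≤ R ∧ ∀ a, Set.MapsTo (φ a) (closedBall 0 R) (closedBall 0 R) := by
  rcases isEmpty_or_nonempty A with hA | hA
  · exact ⟨0, le_rfl, fun a => hA.elim a⟩
  obtain ⟨b, hb⟩ := Finite.exists_max fun a => ‖φ a 0‖
  have hρ : 0 < 1 - (ρ : ℝ) := sub_pos.2 (hφ b).1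
  refine ⟨‖φ b 0‖ / (1 - ρ), by positivity, fun a x hx => ?_⟩
  rw [mem_closedBall] at hx ⊢
  calc dist (φ a x) 0 ≤ dist (φ a x) (φ a 0) + ‖φ a 0‖ := by
        simpa only [dist_zero_right] using dist_triangle (φ a x) (φ a 0) 0
    _ ≤ ρ * (‖φ b 0‖ / (1 - ρ)) + ‖φ b 0‖ :=
        add_le_add ((hφ a).2.dist_le_mul_of_le hx) (hb a)
    _ = ‖φ b 0‖ / (1 - ρ) := by field_simp; ring

lemma wordMap_succ_apply {ι X : Type*} (f : ι → X → X) (n : ℕ) (z : ℕ → ι) (x : X) :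
    wordMap f (n + 1) z x = wordMap f n z (f (z n) x) :=
  congrFun (wordMap_add f n 1 z) x

variable {ι X : Type*} [MetricSpace X] {f : ι → X → X} {ρ : NNReal} {K : Set X}

/-- The point with address `z` of the iterated function system `f`: the limit of the compositions
`f (z 0) ∘ ⋯ ∘ f (z (n - 1))`, evaluated at an arbitrary base point. -/
def codeMap [Nonempty X] (f : ι → X → X) (z : ℕ → ι) : X :=
  limUnder atTop fun n => wordMap f n z (Classical.arbitrary X)

variable [Nonempty X] [CompleteSpace X] [Finite ι]

lemma tendsto_wordMap (hf : ∀ i, ContractingWith ρ (f i)) (z : ℕ → ι) (x : X) :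
    Tendsto (fun n => wordMap f n z x) atTop (𝓝 (codeMap f z)) := by
  have hlip := lipschitzWith_wordMap fun i => (hf i).2
  set o := Classical.arbitrary X
  have : Nonempty ι := ⟨z 0⟩
  obtain ⟨b, hb⟩ := Finite.exists_max fun i => dist o (f i o)
  have hcauchy : CauchySeq fun n => wordMap f n z o := by
    refine cauchySeq_of_le_geometric ρ (dist o (f b o)) (hf b).1 fun n => ?_
    rw [wordMap_succ_apply, mul_comm, ← NNReal.coe_pow]
    exact (hlip n z).dist_le_mul_of_le (hb (z n))
  refine hcauchy.tendsto_limUnder.congr_dist ?_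
  refine squeeze_zero (fun _ => dist_nonneg) (fun n => (hlip n z).dist_le_mul o x) ?_
  simpa only [NNReal.coe_pow, zero_mul] using
    (tendsto_pow_atTop_nhds_zero_of_lt_one ρ.coe_nonneg (hf b).1).mul_const (dist o x)

lemma codeMap_mem (hf : ∀ i, ContractingWith ρ (f i)) (hK : ∀ i, Set.MapsTo (f i) K K)
    (hKc : IsClosed K) (hKn : K.Nonempty) (z : ℕ → ι) : codeMap f z ∈ K :=
  hKc.mem_of_tendsto (tendsto_wordMap hf z hKn.some)
    (.of_forall fun n => mapsTo_wordMap hK n z hKn.some_mem)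

lemma codeMap_eq_wordMap (hf : ∀ i, ContractingWith ρ (f i)) (n : ℕ) (z : ℕ → ι) :
    codeMap f z = wordMap f n z (codeMap f fun i => z (n + i)) := by
  have o := Classical.arbitrary X
  refine tendsto_nhds_unique ((tendsto_wordMap hf z o).comp (tendsto_add_atTop_nat n)) ?_
  have hcont := (lipschitzWith_wordMap (fun i => (hf i).2) n z).continuous
  refine ((hcont.tendsto _).comp (tendsto_wordMap hf (fun i => z (n + i)) o)).congr fun m => ?_
  simp only [Function.comp_apply, add_comm m n, wordMap_add]

lemma measurable_codeMap [MeasurableSpace ι] [MeasurableSingletonClass ι] [MeasurableSpace X]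
    [BorelSpace X] (hf : ∀ i, ContractingWith ρ (f i)) : Measurable (codeMap f) := by
  have o := Classical.arbitrary X
  refine measurable_of_tendsto_metrizable (f := fun n z => wordMap f n z o) (fun n => ?_)
    (tendsto_pi_nhds.2 fun z => tendsto_wordMap hf z o)
  simp only [wordMap_eq_listMap]
  exact (measurable_of_finite fun w : Fin n → ι => listMap f (List.ofFn w) o).comp
    (measurable_pi_lambda _ fun i => measurable_pi_apply _)

end Contraction

section Stationarity

variable {ι X : Type*} [MeasurableSpace ι] [MeasurableSpace X] {P : Measure ι} {f : ι → X → X}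
  {μ : Measure X}

/-- `μ` is stationary for the random map `f i` whose index `i` is chosen with law `P`. -/
def IsStationaryMeasure (P : Measure ι) (f : ι → X → X) (μ : Measure X) : Prop :=
  MeasurePreserving (Function.uncurry f) (P.prod μ) μ

lemma isStationaryMeasure_sum_dirac [Fintype ι] [MeasurableSingletonClass ι] {p : ι → ENNReal}
    [SFinite μ] (hf : ∀ i, Measurable (f i)) (hμ : μ = ∑ i, p i • μ.map (f i)) :
    IsStationaryMeasure (∑ i, p i • Measure.dirac i) f μ := by
  have hmeas : Measurable (Function.uncurry f) := measurable_from_prod_countable_right hf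
  refine ⟨hmeas, ?_⟩
  ext S hS
  conv_rhs => rw [hμ]
  simp only [Measure.map_apply hmeas hS, Measure.prod_apply (hmeas hS),
    lintegral_finsetSum_measure, lintegral_smul_measure, lintegral_dirac, Measure.coe_finsetSum,
    Finset.sum_apply, Measure.smul_apply, Measure.map_apply (hf _) hS]
  rfl

lemma IsStationaryMeasure.comp {κ : Type*} [MeasurableSpace κ] {Q : Measure κ} {e : κ → ι}
    [SFinite P] [SFinite Q] [SFinite μ] (h : IsStationaryMeasure P f μ)
    (he : MeasurePreserving e Q P) :
    IsStationaryMeasure Q (fun k => f (e k)) μ :=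
  MeasurePreserving.comp h (he.prod (.id μ))

lemma IsStationaryMeasure.pi [SigmaFinite P] [SFinite μ] (h : IsStationaryMeasure P f μ) (n : ℕ) :
    IsStationaryMeasure (Measure.pi fun _ : Fin n => P) (fun w => listMap f (List.ofFn w)) μ := by
  induction n with
  | zero =>
    rw [Measure.pi_of_empty]
    exact measurePreserving_snd
  | succ n ih =>
    have hsplit := (measurePreserving_piFinSuccAbove (fun _ : Fin (n + 1) => P) 0).prod (.id μ)
    have hcomp := MeasurePreserving.comp h (((MeasurePreserving.id P).prod ih).comp
      ((measurePreserving_prodAssoc _ _ _).comp hsplit))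
    refine (congrArg (MeasurePreserving · _ μ) ?_).mp hcomp
    ext ⟨w, x⟩
    simp only [Function.uncurry, List.ofFn_succ, listMap]
    rfl

lemma measurePreserving_comp_infinitePi [IsProbabilityMeasure P] {κ J : Type*} [Fintype J]
    {e : J → κ} (he : e.Injective) :
    MeasurePreserving (fun (z : κ → ι) => z ∘ e) (Measure.infinitePi fun _ => P)
      (Measure.pi fun _ => P) := by
  refine ⟨by fun_prop, ?_⟩
  rw [← Measure.infinitePi_eq_pi]
  exact Measure.map_infinitePi_infinitePi_of_inj he

lemma IsStationaryMeasure.infinitePi [IsProbabilityMeasure P] [SFinite μ]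
    (h : IsStationaryMeasure P f μ) (n : ℕ) :
    IsStationaryMeasure (Measure.infinitePi fun _ => P) (fun z => wordMap f n z) μ := by
  simp only [wordMap_eq_listMap]
  exact (h.pi n).comp (measurePreserving_comp_infinitePi Fin.val_injective)

lemma IsStationaryMeasure.measurePreserving_codeMap {ι X : Type*} [Finite ι] [MeasurableSpace ι]
    [MeasurableSingletonClass ι] [MetricSpace X] [CompleteSpace X] [Nonempty X] [MeasurableSpace X]
    [BorelSpace X] {f : ι → X → X} {ρ : NNReal} {P : Measure ι} {μ : Measure X}
    [IsProbabilityMeasure P] [IsProbabilityMeasure μ] (hf : ∀ i, ContractingWith ρ (f i))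
    (h : IsStationaryMeasure P f μ) :
    MeasurePreserving (codeMap f) (Measure.infinitePi fun _ => P) μ := by
  have hcode : Measurable (codeMap f) := measurable_codeMap hf
  have : IsProbabilityMeasure ((Measure.infinitePi fun _ : ℕ => P).map (codeMap f)) :=
    Measure.isProbabilityMeasure_map hcode.aemeasurable
  refine ⟨hcode, ext_of_forall_integral_eq_of_IsFiniteMeasure fun g => ?_⟩
  set Q := (Measure.infinitePi fun _ : ℕ => P).prod μ
  have hconst : ∀ n, ∫ q, g (wordMap f n q.1 q.2) ∂Q = ∫ x, g x ∂μ := fun n =>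
    (h.infinitePi n).map_eq ▸ (integral_map (h.infinitePi n).measurable.aemeasurable
      g.continuous.aestronglyMeasurable).symm
  have hlim : Tendsto (fun n => ∫ q, g (wordMap f n q.1 q.2) ∂Q) atTop
      (𝓝 (∫ q, g (codeMap f q.1) ∂Q)) :=
    tendsto_integral_of_dominated_convergence (fun _ => ‖g‖)
      (fun n => g.continuous.aestronglyMeasurable.comp_measurable (h.infinitePi n).measurable)
      (integrable_const _) (fun n => .of_forall fun q => g.norm_coe_le_norm _)
      (.of_forall fun q => (g.continuous.tendsto _).comp (tendsto_wordMap hf q.1 q.2))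
  calc ∫ x, g x ∂(Measure.infinitePi fun _ => P).map (codeMap f)
      = ∫ z, g (codeMap f z) ∂(Measure.infinitePi fun _ => P) :=
        integral_map hcode.aemeasurable g.continuous.aestronglyMeasurable
    _ = ∫ q, g (codeMap f q.1) ∂Q := by
        rw [integral_fun_fst fun z => g (codeMap f z), probReal_univ, one_smul]
    _ = ∫ x, g x ∂μ := tendsto_nhds_unique hlim (by simp only [hconst, tendsto_const_nhds])

lemma measurePreserving_zip_infinitePi {α β : Type*} [MeasurableSpace α] [MeasurableSpace β]
    (P : Measure α) (Q : Measure β) [IsProbabilityMeasure P] [IsProbabilityMeasure Q] :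
    MeasurePreserving (fun (q : (ℕ → α) × (ℕ → β)) i => (q.1 i, q.2 i))
      ((Measure.infinitePi fun _ => P).prod (Measure.infinitePi fun _ => Q))
      (Measure.infinitePi fun _ => P.prod Q) := by
  have hzip : Measurable fun (q : (ℕ → α) × (ℕ → β)) i => (q.1 i, q.2 i) := by fun_prop
  refine ⟨hzip, ((Measure.isProjectiveLimit_infinitePi _).unique fun I => ?_).symm⟩
  have hI : Function.Injective ((↑) : I → ℕ) := Subtype.val_injective
  rw [Measure.map_map (Finset.measurable_restrict I) hzip]
  exact ((measurePreserving_arrowProdEquivProdArrow α β I (fun _ => P) (fun _ => Q)).symm.comp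
    ((measurePreserving_comp_infinitePi hI).prod (measurePreserving_comp_infinitePi hI))).map_eq

end Stationarity

section Separation

lemma exists_mem_cylinder_ne_of_measurePreserving {ι X : Type*} [Countable ι] [MeasurableSpace ι]
    [MeasurableSingletonClass ι] [MeasurableSpace X] [MeasurableSingletonClass X] {P : Measure ι}
    [IsProbabilityMeasure P] {μ : Measure X} [NullSingletonClass μ] {π : (ℕ → ι) → X}
    (hπ : MeasurePreserving π (Measure.infinitePi fun _ => P) μ) (hP : ∀ i, P {i} ≠ 0)
    (z : ℕ → ι) (n : ℕ) : ∃ z' ∈ PiNat.cylinder z n, π z' ≠ π z := by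
  by_contra! hconst
  refine (?_ : (Measure.infinitePi fun _ => P) (PiNat.cylinder z n) ≠ 0)
    (measure_mono_null (fun z' hz' => hconst z' hz') ?_)
  · rw [PiNat.cylinder_eq_pi, Measure.infinitePi_pi _ fun _ _ => measurableSet_singleton _]
    exact Finset.prod_ne_zero_iff.2 fun i _ => hP (z i)
  · change (Measure.infinitePi fun _ => P) (π ⁻¹' {π z}) = 0
    rw [hπ.measure_preimage (measurableSet_singleton _).nullMeasurableSet, measure_singleton]

lemma exists_forall_mem_cylinder_le_dist {ι X : Type*} [Finite ι] [MetricSpace X]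
    {π : (ℕ → ι) → X} {n : ℕ} (hπ : ∀ z, ∃ z' ∈ PiNat.cylinder z n, π z' ≠ π z) :
    ∃ D > 0, ∀ z, ∃ z' ∈ PiNat.cylinder z n, D ≤ dist (π z) (π z') := by
  have hword : ∀ w : Fin n → ι, ∃ D > 0, ∀ z : ℕ → ι, z ∘ Fin.val = w →
      ∃ z' ∈ PiNat.cylinder z n, D ≤ dist (π z) (π z') := fun w => by
    by_cases hw : ∃ z₀ : ℕ → ι, z₀ ∘ Fin.val = w
    · obtain ⟨z₀, rfl⟩ := hw
      obtain ⟨z₁, hz₁, hne⟩ := hπ z₀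
      refine ⟨dist (π z₁) (π z₀) / 2, half_pos (dist_pos.2 hne), fun z hz => ?_⟩
      have hz₀ : z₀ ∈ PiNat.cylinder z n := fun i hi => (congrFun hz ⟨i, hi⟩).symm
      have htri := dist_triangle_left (π z₁) (π z₀) (π z)
      rcases le_total (dist (π z) (π z₀)) (dist (π z) (π z₁)) with hle | hle
      · exact ⟨z₁, fun i hi => (hz₁ i hi).trans (hz₀ i hi), by linarith⟩
      · exact ⟨z₀, hz₀, by linarith⟩
    · exact ⟨1, one_pos, fun z hz => (hw ⟨z, hz⟩).elim⟩
  choose D hD hDz using hword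
  rcases isEmpty_or_nonempty (Fin n → ι) with hempty | hne
  · exact ⟨1, one_pos, fun z => (hempty.false (z ∘ Fin.val)).elim⟩
  · obtain ⟨w, hw⟩ := Finite.exists_min D
    refine ⟨D w, hD w, fun z => ?_⟩
    obtain ⟨z', hz', hDz'⟩ := hDz _ z rfl
    exact ⟨z', hz', (hw _).trans hDz'⟩

variable {ι X : Type*} [MetricSpace X] {f : ι → X → X} {ρ : NNReal} {K : Set X} {η : ℝ}

lemma dist_wordMap_le_of_mem_cylinder (hf : ∀ i, LipschitzWith ρ (f i))
    (hK : Bornology.IsBounded K) {n : ℕ} {z z' : ℕ → ι} (hz : z' ∈ PiNat.cylinder z n) {x y : X}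
    (hx : x ∈ K) (hy : y ∈ K) :
    dist (wordMap f n z x) (wordMap f n z' y) ≤ ρ ^ n * diam K := by
  rw [wordMap_congr hz, ← NNReal.coe_pow]
  exact (lipschitzWith_wordMap hf n z).dist_le_mul_of_le (dist_le_diam_of_mem hK hx hy)

lemma exists_forall_ge_pow_mul_le {θ : ℝ} (hθ0 : 0 ≤ θ) (hθ1 : θ < 1) (Δ : ℝ) {ε : ℝ}
    (hε : 0 < ε) : ∃ n, ∀ m ≥ n, θ ^ m * Δ ≤ ε := by
  have hlim := (tendsto_pow_atTop_nhds_zero_of_lt_one hθ0 hθ1).mul_const Δ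
  rw [zero_mul] at hlim
  exact eventually_atTop.1 (hlim.eventually_le_const hε)

variable [Nonempty X] [CompleteSpace X] [Finite ι] [Nonempty ι]

lemma exists_separated_words (hf : ∀ i, ContractingWith ρ (f i))
    (hKm : ∀ i, Set.MapsTo (f i) K K) (hKc : IsClosed K) (hKb : Bornology.IsBounded K)
    (hKn : K.Nonempty)
    (hcode : ∀ z n, ∃ z' ∈ PiNat.cylinder z n, codeMap f z' ≠ codeMap f z) (hη : 0 < η) :
    ∃ n ≠ 0, ∃ D > 0, ∀ z : ℕ → ι, ∃ z' : ℕ → ι, ∀ x ∈ K, ∀ y ∈ K,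
      D ≤ dist (wordMap f n z x) (wordMap f n z' y) ∧
        dist (wordMap f n z x) (wordMap f n z' y) ≤ η := by
  have hρ : ρ < 1 := (hf (Classical.arbitrary ι)).1
  obtain ⟨m, hm⟩ := exists_forall_ge_pow_mul_le ρ.coe_nonneg hρ (diam K) hη
  obtain ⟨D, hD, hsep⟩ := exists_forall_mem_cylinder_le_dist fun z => hcode z m
  obtain ⟨k, hk⟩ := exists_forall_ge_pow_mul_le ρ.coe_nonneg hρ (diam K)
    (show 0 < D / 4 by positivity)
  refine ⟨m + k + 1, by omega, D / 2, by positivity, fun z => ?_⟩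
  obtain ⟨z', hz', hDz'⟩ := hsep z
  have hmem := codeMap_mem hf hKm hKc hKn
  have hnear : ∀ z, ∀ x ∈ K, dist (codeMap f z) (wordMap f (m + k + 1) z x) ≤ D / 4 :=
    fun z x hx => by
      rw [codeMap_eq_wordMap hf (m + k + 1) z]
      exact (dist_wordMap_le_of_mem_cylinder (fun i => (hf i).2) hKb (PiNat.self_mem_cylinder z _)
        (hmem _) hx).trans (hk _ (by omega))
  refine ⟨z', fun x hx y hy => ⟨?_, ?_⟩⟩
  · have htri := dist_triangle4_right (codeMap f z) (codeMap f z') (wordMap f (m + k + 1) z x)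
      (wordMap f (m + k + 1) z' y)
    linarith [hnear z x hx, hnear z' y hy]
  · rw [add_assoc, wordMap_add _ _ _ z, wordMap_add _ _ _ z']
    exact (dist_wordMap_le_of_mem_cylinder (fun i => (hf i).2) hKb hz' (mapsTo_wordMap hKm _ _ hx)
      (mapsTo_wordMap hKm _ _ hy)).trans (hm m le_rfl)

lemma exists_separated_blocks (hf : ∀ i, ContractingWith ρ (f i))
    (hKm : ∀ i, Set.MapsTo (f i) K K) (hKc : IsClosed K) (hKb : Bornology.IsBounded K)
    (hKn : K.Nonempty)
    (hcode : ∀ z n, ∃ z' ∈ PiNat.cylinder z n, codeMap f z' ≠ codeMap f z) (hη : 0 < η) :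
    ∃ n ≠ 0, ∃ D > 0, ∃ σ : (Fin n → ι) → Fin n → ι, ∀ w, ∀ x ∈ K, ∀ y ∈ K,
      D ≤ dist (listMap f (List.ofFn w) x) (listMap f (List.ofFn (σ w)) y) ∧
        dist (listMap f (List.ofFn w) x) (listMap f (List.ofFn (σ w)) y) ≤ η := by
  obtain ⟨n, hn, D, hD, hsep⟩ := exists_separated_words hf hKm hKc hKb hKn hcode hη
  choose τ hτ using hsep
  choose ext hext using (Fin.val_injective (n := n)).surjective_comp_right (γ := ι)
  refine ⟨n, hn, D, hD, fun w i => τ (ext w) i, fun w => ?_⟩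
  have hw : (fun i : Fin n => ext w i) = w := hext w
  simpa only [wordMap_eq_listMap, hw] using hτ (ext w)

end Separation

section FiniteWeights

variable {Y W : Type*} [MeasurableSpace Y] [MeasurableSingletonClass Y]
  [MeasurableSpace W] [MeasurableSingletonClass W]

lemma sum_smul_dirac_singleton [Fintype Y] (c : Y → ENNReal) (y : Y) :
    (∑ y, c y • Measure.dirac y : Measure Y) {y} = c y := by
  classical simp [Set.indicator_apply]

lemma exists_measurePreserving_of_surjective [Finite Y] [Finite W] {e : Y → W} (he : e.Surjective)
    (P : Measure W) [IsProbabilityMeasure P] (hP : ∀ w, P {w} ≠ 0) :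
    ∃ M : Measure Y, IsProbabilityMeasure M ∧ (∀ y, M {y} ≠ 0) ∧ MeasurePreserving e M P := by
  classical
  have := Fintype.ofFinite Y
  let fiber (w : W) : Finset Y := {y | e y = w}
  let M : Measure Y := ∑ y, (P {e y} / (fiber (e y)).card) • Measure.dirac y
  have hM : ∀ y, M {y} = P {e y} / (fiber (e y)).card := sum_smul_dirac_singleton _
  have hmp : MeasurePreserving e M P := by
    refine ⟨measurable_of_finite e, Measure.ext_of_singleton fun w => ?_⟩
    obtain ⟨y, rfl⟩ := he w
    have hcard : ((fiber (e y)).card : ENNReal) ≠ 0 :=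
      Nat.cast_ne_zero.2 (Finset.card_ne_zero_of_mem (by simp [fiber] : y ∈ fiber (e y)))
    have hpre : e ⁻¹' {e y} = fiber (e y) := by ext; simp [fiber]
    rw [Measure.map_apply (measurable_of_finite e) (measurableSet_singleton _), hpre,
      ← sum_measure_singleton]
    calc ∑ y' ∈ fiber (e y), M {y'} = ∑ _y' ∈ fiber (e y), P {e y} / (fiber (e y)).card :=
          Finset.sum_congr rfl fun y' hy' => by rw [hM, (Finset.mem_filter.1 hy').2]
      _ = P {e y} := by
          rw [Finset.sum_const, nsmul_eq_mul, ENNReal.mul_div_cancel hcard (by simp)]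
  have : IsProbabilityMeasure (M.map e) := hmp.map_eq.symm ▸ inferInstance
  refine ⟨M, Measure.isProbabilityMeasure_of_map e, fun y => ?_, hmp⟩
  rw [hM]
  exact ENNReal.div_ne_zero.2 ⟨hP _, ENNReal.natCast_ne_top _⟩

/- The linear system for `q` splits into `2 × 2` blocks along the orbits of `ι`; its solution is
nonnegative once the bias `κ` is small compared with the smallest value of `m`. -/
lemma exists_weights_of_involutive {Y : Type*} [Finite Y] [Nonempty Y] {ι : Y → Y}
    (hι : Function.Involutive ι) {m : Y → ℝ} (hm0 : ∀ y, 0 < m y) (hm1 : ∀ y, m y ≤ 1) :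
    ∃ (κ : ℝ) (q : Y → ℝ), 0 < κ ∧ κ < 1 ∧ (∀ y, 0 ≤ q y) ∧
      ∀ y, q y * (1 - κ) + q (ι y) * κ = m y := by
  obtain ⟨y₀, hy₀⟩ := Finite.exists_min m
  obtain ⟨κ, hκ⟩ : ∃ κ, κ = m y₀ / 3 := ⟨_, rfl⟩
  have hκ0 : 0 < κ := by linarith [hm0 y₀]
  have hκ1 : κ ≤ 1 / 3 := by linarith [hm1 y₀]
  have hden : 0 < 1 - 2 * κ := by linarith
  refine ⟨κ, fun y => ((1 - κ) * m y - κ * m (ι y)) / (1 - 2 * κ), hκ0, by linarith,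
    fun y => div_nonneg ?_ hden.le, fun y => ?_⟩
  · nlinarith [hy₀ y, hm1 (ι y)]
  · beta_reduce
    rw [hι y, div_mul_eq_mul_div, div_mul_eq_mul_div, ← add_div, div_eq_iff hden.ne']
    ring

lemma exists_measurePreserving_randomFlip [Finite Y] [Nonempty Y] {ι : Y → Y}
    (hι : Function.Involutive ι) (M : Measure Y) [IsProbabilityMeasure M] (hM : ∀ y, M {y} ≠ 0) :
    ∃ (Q : Measure Y) (β : Measure Bool), IsProbabilityMeasure Q ∧ IsProbabilityMeasure β ∧
      (∀ b, β {b} ≠ 0) ∧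
      MeasurePreserving (fun q : Y × Bool => cond q.2 (ι q.1) q.1) (Q.prod β) M := by
  have := Fintype.ofFinite Y
  obtain ⟨κ, q, hκ0, hκ1, hq, hqm⟩ := exists_weights_of_involutive hι (m := fun y => M.real {y})
    (fun y => ENNReal.toReal_pos (hM y) (measure_ne_top _ _)) fun _ => measureReal_le_one
  have hκ1' : 0 < 1 - κ := sub_pos.2 hκ1
  let Q : Measure Y := ∑ y, ENNReal.ofReal (q y) • Measure.dirac y
  let β : Measure Bool := ∑ b, ENNReal.ofReal (cond b κ (1 - κ)) • Measure.dirac b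
  have hmp : MeasurePreserving (fun q : Y × Bool => cond q.2 (ι q.1) q.1) (Q.prod β) M := by
    have hmeas : Measurable fun q : Y × Bool => cond q.2 (ι q.1) q.1 := measurable_of_finite _
    refine ⟨hmeas, Measure.ext_of_singleton fun y => ?_⟩
    have hpre : (fun q : Y × Bool => cond q.2 (ι q.1) q.1) ⁻¹' {y}
        = {y} ×ˢ {false} ∪ {ι y} ×ˢ {true} := by
      ext ⟨y', b⟩
      cases b <;> simp [hι.eq_iff, eq_comm]
    rw [Measure.map_apply hmeas (measurableSet_singleton y), hpre,
      measure_union (by simp) (.prod (measurableSet_singleton _) (measurableSet_singleton _))]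
    simp only [Measure.prod_prod, Q, β, sum_smul_dirac_singleton, cond_false, cond_true]
    rw [← ENNReal.ofReal_mul (hq _), ← ENNReal.ofReal_mul (hq _), ← ENNReal.ofReal_add
      (mul_nonneg (hq _) hκ1'.le) (mul_nonneg (hq _) hκ0.le), hqm, ofReal_measureReal]
  have hβ : IsProbabilityMeasure β := ⟨by
    simp [β, ← ENNReal.ofReal_add hκ0.le hκ1'.le]⟩
  have hQβ : IsProbabilityMeasure (Q.prod β) := by
    have : IsProbabilityMeasure ((Q.prod β).map fun q => cond q.2 (ι q.1) q.1) :=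
      hmp.map_eq.symm ▸ inferInstance
    exact Measure.isProbabilityMeasure_of_map fun q : Y × Bool => cond q.2 (ι q.1) q.1
  refine ⟨Q, β, ⟨?_⟩, hβ, fun b => ?_, hmp⟩
  · simpa only [← Set.univ_prod_univ, Measure.prod_prod, measure_univ, mul_one]
      using hQβ.measure_univ
  · cases b <;> simpa [β, sum_smul_dirac_singleton]

end FiniteWeights

section BalancedMeasures

variable {ι : Type*} [MeasurableSpace ι] {b : ℝ} {m : Measure (ℕ → ι)}

/-- The measure `m` on the sequence space gives every subcylinder between `b` and `1 - b` times the
mass of its parent cylinder. -/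
structure IsBalanced (b : ℝ) (m : Measure (ℕ → ι)) : Prop where
  mul_le_real_cylinder_succ (n : ℕ) (t : ℕ → ι) :
    b * m.real (PiNat.cylinder t n) ≤ m.real (PiNat.cylinder t (n + 1))
  real_cylinder_succ_le (n : ℕ) (t : ℕ → ι) :
    m.real (PiNat.cylinder t (n + 1)) ≤ (1 - b) * m.real (PiNat.cylinder t n)

namespace IsBalanced

lemma pow_mul_le_real_cylinder_add (h : IsBalanced b m) (hb : 0 ≤ b) (n k : ℕ) (t : ℕ → ι) :
    b ^ k * m.real (PiNat.cylinder t n) ≤ m.real (PiNat.cylinder t (n + k)) := by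
  induction k with
  | zero => simp
  | succ k ih =>
    rw [pow_succ', mul_assoc]
    exact (mul_le_mul_of_nonneg_left ih hb).trans (h.mul_le_real_cylinder_succ _ t)

lemma real_cylinder_add_le (h : IsBalanced b m) (hb : b ≤ 1) (n k : ℕ) (t : ℕ → ι) :
    m.real (PiNat.cylinder t (n + k)) ≤ (1 - b) ^ k * m.real (PiNat.cylinder t n) := by
  induction k with
  | zero => simp
  | succ k ih =>
    rw [pow_succ', mul_assoc]
    exact (h.real_cylinder_succ_le _ t).trans (mul_le_mul_of_nonneg_left ih (sub_nonneg.2 hb))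

end IsBalanced

variable [MeasurableSingletonClass ι] {β : Measure ι} [IsProbabilityMeasure β]

lemma infinitePi_real_cylinder_succ (t : ℕ → ι) (n : ℕ) :
    (Measure.infinitePi fun _ : ℕ => β).real (PiNat.cylinder t (n + 1))
      = β.real {t n} * (Measure.infinitePi fun _ : ℕ => β).real (PiNat.cylinder t n) := by
  simp only [PiNat.cylinder_eq_pi, Measure.real]
  rw [Measure.infinitePi_pi _ fun _ _ => measurableSet_singleton _,
    Measure.infinitePi_pi _ fun _ _ => measurableSet_singleton _, Finset.prod_range_succ, mul_comm,
    ENNReal.toReal_mul]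

lemma exists_isBalanced_infinitePi [Finite ι] [Nontrivial ι] (hβ : ∀ i, β {i} ≠ 0) :
    ∃ b, 0 < b ∧ b < 1 ∧ IsBalanced b (Measure.infinitePi fun _ : ℕ => β) := by
  have hpos : ∀ i, 0 < β.real {i} := fun i => ENNReal.toReal_pos (hβ i) (measure_ne_top _ _)
  obtain ⟨i₀, hi₀⟩ := Finite.exists_min fun i => β.real {i}
  have hle : ∀ i, β.real {i} ≤ 1 - β.real {i₀} := fun i => by
    obtain ⟨j, hj⟩ := exists_ne i
    have hadd : β.real ({j} ∪ {i}) = β.real {j} + β.real {i} :=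
      measureReal_union (by simpa using hj) (measurableSet_singleton i)
    linarith [hi₀ j, measureReal_le_one (μ := β) (s := {j} ∪ {i})]
  refine ⟨β.real {i₀}, hpos i₀, by linarith [hle i₀, hpos i₀], fun n t => ?_, fun n t => ?_⟩
  · rw [infinitePi_real_cylinder_succ]
    exact mul_le_mul_of_nonneg_right (hi₀ _) measureReal_nonneg
  · rw [infinitePi_real_cylinder_succ]
    exact mul_le_mul_of_nonneg_right (hle _) measureReal_nonneg

end BalancedMeasures

section CantorCoding

variable {ι X : Type*} [PseudoMetricSpace X] {C c θ : ℝ} {π : (ℕ → ι) → X}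
  {ℓ : ℕ → (ℕ → ι) → ℝ}

/-- The map `π` codes a Cantor set by sequences: the image of the cylinder of length `n` around `t`
has size about `ℓ n t`, its subcylinders are separated at that scale, and the scales `ℓ n t`
decrease exponentially in `n`, without jumps. The constants do not depend on `n` and `t`. -/
structure IsCantorCoding (C c θ : ℝ) (π : (ℕ → ι) → X) (ℓ : ℕ → (ℕ → ι) → ℝ) : Prop where
  pos (n t) : 0 < ℓ n t
  dist_le (n t) : ∀ t' ∈ PiNat.cylinder t n, dist (π t') (π t) ≤ C * ℓ n t
  le_dist (n t) : ∀ t' ∈ PiNat.cylinder t n, t' n ≠ t n → c * ℓ n t ≤ dist (π t') (π t)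
  le_zero (t) : c ≤ ℓ 0 t
  le_succ (n t) : c * ℓ n t ≤ ℓ (n + 1) t
  add_le (n k t) : ℓ (n + k) t ≤ C * θ ^ k * ℓ n t

namespace IsCantorCoding

lemma pow_mul_le_add (h : IsCantorCoding C c θ π ℓ) (hc : 0 ≤ c) (n k : ℕ) (t : ℕ → ι) :
    c ^ k * ℓ n t ≤ ℓ (n + k) t := by
  induction k with
  | zero => simp
  | succ k ih =>
    rw [pow_succ', mul_assoc]
    exact (mul_le_mul_of_nonneg_left ih hc).trans (h.le_succ _ t)

lemma le_mul_of_le (h : IsCantorCoding C c θ π ℓ) (hC : 0 ≤ C) (hθ0 : 0 ≤ θ) (hθ1 : θ ≤ 1)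
    {i n : ℕ} (hin : i ≤ n) (t : ℕ → ι) : ℓ n t ≤ C * ℓ i t := by
  obtain ⟨k, rfl⟩ := Nat.exists_eq_add_of_le hin
  refine (h.add_le i k t).trans (mul_le_mul_of_nonneg_right ?_ (h.pos i t).le)
  exact mul_le_of_le_one_right hC (pow_le_one₀ hθ0 hθ1)

lemma cylinder_subset_preimage (h : IsCantorCoding C c θ π ℓ) {n : ℕ} {t : ℕ → ι} {s : ℝ}
    (hs : C * ℓ n t ≤ s) : PiNat.cylinder t n ⊆ π ⁻¹' closedBall (π t) s :=
  fun t' ht' => (h.dist_le n t t' ht').trans hs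

lemma preimage_subset_cylinder (h : IsCantorCoding C c θ π ℓ) {n : ℕ} {t : ℕ → ι} {s : ℝ}
    (hs : ∀ i < n, s < c * ℓ i t) : π ⁻¹' closedBall (π t) s ⊆ PiNat.cylinder t n := by
  intro t' ht'
  rcases eq_or_ne t' t with rfl | hne
  · exact PiNat.self_mem_cylinder t' n
  · rw [PiNat.mem_cylinder_iff_le_firstDiff hne]
    by_contra! hlt
    exact ((hs _ hlt).trans_le (h.le_dist _ t t' (PiNat.mem_cylinder_firstDiff t' t)
      (PiNat.apply_firstDiff_ne hne))).not_ge ht'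

lemma exists_level (h : IsCantorCoding C c θ π ℓ) (hC : 0 ≤ C) (hθ0 : 0 ≤ θ) (hθ1 : θ < 1)
    (t : ℕ → ι) {s : ℝ} (hs : 0 < s) : ∃ n, C * ℓ n t ≤ s ∧ ∀ i < n, s < C * ℓ i t := by
  classical
  have hex : ∃ n, C * ℓ n t ≤ s := by
    have hlim := (tendsto_pow_atTop_nhds_zero_of_lt_one hθ0 hθ1).const_mul (C * C * ℓ 0 t)
    rw [mul_zero] at hlim
    obtain ⟨n, hn⟩ := (hlim.eventually_le_const hs).exists
    have hdecay := h.add_le 0 n t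
    rw [zero_add] at hdecay
    exact ⟨n, by nlinarith⟩
  exact ⟨Nat.find hex, Nat.find_spec hex, fun i hi => not_le.1 (Nat.find_min hex hi)⟩

lemma mul_le_of_forall_lt (h : IsCantorCoding C c θ π ℓ) (hC : 1 ≤ C) (hc : 0 < c)
    {n : ℕ} {t : ℕ → ι} {r : ℝ} (hr : r ≤ 1) (hn : ∀ i < n, r < C * ℓ i t) :
    c / C * r ≤ ℓ n t := by
  have hC0 : 0 < C := by linarith
  rw [div_mul_eq_mul_div, div_le_iff₀' hC0]
  cases n with
  | zero => nlinarith [h.le_zero t]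
  | succ n => nlinarith [h.le_succ n t, hn n n.lt_succ_self]

lemma preimage_subset_cylinder_add (h : IsCantorCoding C c θ π ℓ) (hC : 1 ≤ C) (hc0 : 0 < c)
    (hc1 : c < 1) (hθ0 : 0 ≤ θ) (hθ1 : θ ≤ 1) {n k : ℕ} {t : ℕ → ι} {r ε : ℝ} (hr0 : 0 < r)
    (hr1 : r ≤ 1) (hn : ∀ i < n, r < C * ℓ i t) (hε : ε ≤ c ^ k * (c ^ 3 / C ^ 2)) :
    π ⁻¹' closedBall (π t) (ε * r) ⊆ PiNat.cylinder t (n + (k + 1)) := by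
  have hC0 : 0 < C := by linarith
  refine h.preimage_subset_cylinder fun i hi => ?_
  have hscale : c ^ k * (c / C * r) ≤ C * ℓ i t :=
    calc c ^ k * (c / C * r) ≤ c ^ k * ℓ n t := by
          gcongr; exact h.mul_le_of_forall_lt hC hc0 hr1 hn
      _ ≤ ℓ (n + k) t := h.pow_mul_le_add hc0.le n k t
      _ ≤ C * ℓ i t := h.le_mul_of_le hC0.le hθ0 hθ1 (by omega) t
  calc ε * r ≤ c ^ k * (c ^ 3 / C ^ 2) * r := by gcongr
    _ = c * (c / C * (c ^ k * (c / C * r))) := by ring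
    _ < c / C * (c ^ k * (c / C * r)) := mul_lt_of_lt_one_left (by positivity) hc1
    _ ≤ c / C * (C * ℓ i t) := by gcongr
    _ = c * ℓ i t := by field_simp

variable [MeasurableSpace ι] {b : ℝ} {m : Measure (ℕ → ι)} [IsFiniteMeasure m]

lemma real_preimage_closedBall_mul_le (h : IsCantorCoding C c θ π ℓ) (hm : IsBalanced b m)
    (hb : 0 < b) (hC : 0 ≤ C) (hθ0 : 0 ≤ θ) (hθ1 : θ < 1) {L : ℝ} {k : ℕ} (hL : 0 < L)
    (hk : L * C ^ 2 * θ ^ k ≤ c) (t : ℕ → ι) {s : ℝ} (hs : 0 < s) :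
    m.real (π ⁻¹' closedBall (π t) (L * s)) ≤ b⁻¹ ^ k * m.real (π ⁻¹' closedBall (π t) s) := by
  obtain ⟨n, hn, hlt⟩ := h.exists_level hC hθ0 hθ1 t hs
  have hsub : π ⁻¹' closedBall (π t) (L * s) ⊆ PiNat.cylinder t (n - k) :=
    h.preimage_subset_cylinder fun i hi => by
      calc L * s < L * (C * ℓ (i + k) t) := by gcongr; exact hlt _ (by omega)
        _ ≤ L * (C * (C * θ ^ k * ℓ i t)) := by gcongr; exact h.add_le i k t
        _ = L * C ^ 2 * θ ^ k * ℓ i t := by ring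
        _ ≤ c * ℓ i t := mul_le_mul_of_nonneg_right hk (h.pos i t).le
  have hmass : m.real (PiNat.cylinder t (n - k)) ≤ b⁻¹ ^ k * m.real (PiNat.cylinder t n) := by
    rw [inv_pow, ← div_eq_inv_mul, le_div_iff₀' (pow_pos hb k)]
    refine (hm.pow_mul_le_real_cylinder_add hb.le (n - k) k t).trans (measureReal_mono ?_)
    exact PiNat.cylinder_anti t (by omega)
  calc m.real (π ⁻¹' closedBall (π t) (L * s)) ≤ m.real (PiNat.cylinder t (n - k)) :=
        measureReal_mono hsub
    _ ≤ b⁻¹ ^ k * m.real (PiNat.cylinder t n) := hmass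
    _ ≤ b⁻¹ ^ k * m.real (π ⁻¹' closedBall (π t) s) := by
        gcongr
        · finiteness
        · exact h.cylinder_subset_preimage hn

lemma real_preimage_closedBall_mul_le_rpow (h : IsCantorCoding C c θ π ℓ) (hm : IsBalanced b m)
    (hb0 : 0 < b) (hb1 : b < 1) (hC : 1 ≤ C) (hc0 : 0 < c) (hc1 : c < 1) (hθ0 : 0 ≤ θ)
    (hθ1 : θ < 1) (t : ℕ → ι) {r ε : ℝ} (hr0 : 0 < r) (hr1 : r ≤ 1) (hε : 0 < ε)
    (hεc : ε ≤ c ^ 3 / C ^ 2) :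
    m.real (π ⁻¹' closedBall (π t) (ε * r)) ≤
      (ε / (c ^ 3 / C ^ 2)) ^ Real.logb c (1 - b) * m.real (π ⁻¹' closedBall (π t) r) := by
  have hC0 : 0 < C := by linarith
  have hb1' : 0 < 1 - b := sub_pos.2 hb1
  have hα : 0 < Real.logb c (1 - b) := Real.logb_pos_of_base_lt_one hc0 hc1 hb1' (by linarith)
  obtain ⟨n, hn, hlt⟩ := h.exists_level hC0.le hθ0 hθ1 t hr0
  obtain ⟨k, hk, hk'⟩ := exists_nat_pow_near_of_lt_one (show 0 < ε / (c ^ 3 / C ^ 2) by positivity)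
    (div_le_one_of_le₀ hεc (by positivity)) hc0 hc1
  have hpow : (1 - b) ^ (k + 1) ≤ (ε / (c ^ 3 / C ^ 2)) ^ Real.logb c (1 - b) :=
    calc (1 - b) ^ (k + 1) = (c ^ (k + 1)) ^ Real.logb c (1 - b) := by
          rw [← Real.rpow_natCast, ← Real.rpow_natCast, ← Real.rpow_mul hc0.le, mul_comm,
            Real.rpow_mul hc0.le, Real.rpow_logb hc0 hc1.ne hb1']
      _ ≤ _ := by gcongr
  calc m.real (π ⁻¹' closedBall (π t) (ε * r)) ≤ m.real (PiNat.cylinder t (n + (k + 1))) :=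
        measureReal_mono (h.preimage_subset_cylinder_add hC hc0 hc1 hθ0 hθ1.le hr0 hr1 hlt
          ((div_le_iff₀ (by positivity)).1 hk'))
    _ ≤ (1 - b) ^ (k + 1) * m.real (PiNat.cylinder t n) :=
        hm.real_cylinder_add_le hb1.le n (k + 1) t
    _ ≤ _ := by
        gcongr
        · finiteness
        · exact h.cylinder_subset_preimage hn

end IsCantorCoding

end CantorCoding

section DoublingDecay

lemma measure_le_ofReal_mul {X : Type*} [MeasurableSpace X] {ν : Measure X} [IsFiniteMeasure ν]
    {s t : Set X} {D : ℝ} (hD : 0 ≤ D) (h : ν.real s ≤ D * ν.real t) :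
    ν s ≤ ENNReal.ofReal D * ν t := by
  rw [← ofReal_measureReal (μ := ν) (s := s), ← ofReal_measureReal (μ := ν) (s := t),
    ← ENNReal.ofReal_mul hD]
  exact ENNReal.ofReal_le_ofReal h

variable {F : Type*} [NormedAddCommGroup F] [MeasurableSpace F] [BorelSpace F] {ν : Measure F}
  {S : Set F} {D δ α r ε : ℝ} {x : F}

/-- The measure `ν` is doubling with constant `C₁`, and it is uniformly decaying: within every ball
of radius at most `1` centred in the support, balls of relative radius `ε` have relative mass at
most `C₂ * ε ^ α`. -/
structure IsDoublingDecaying (C₁ C₂ α : ℝ) (ν : Measure F) : Prop where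
  measure_closedBall_two_mul_le : ∀ x ∈ msupport ν, ∀ r : ℝ, 0 < r →
    ν (closedBall x (2 * r)) ≤ ENNReal.ofReal C₁ * ν (closedBall x r)
  measure_closedBall_inter_le : ∀ x ∈ msupport ν, ∀ (y : F) (r ε : ℝ), 0 < r → r ≤ 1 → 0 < ε →
    ν (closedBall y (ε * r) ∩ closedBall x r) ≤
      ENNReal.ofReal (C₂ * ε ^ α) * ν (closedBall x r)

lemma real_closedBall_two_mul_le_of_forall_mem [IsFiniteMeasure ν]
    (hS : ∀ U, MeasurableSet U → ν U ≠ 0 → (U ∩ S).Nonempty) (hD0 : 0 ≤ D)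
    (hD : ∀ z ∈ S, ∀ s > 0, ν.real (closedBall z (5 * s)) ≤ D * ν.real (closedBall z s))
    (hx : x ∈ msupport ν) (hr : 0 < r) :
    ν.real (closedBall x (2 * r)) ≤ D * ν.real (closedBall x r) := by
  obtain ⟨z, hz, hzS⟩ := hS _ measurableSet_ball (hx (r / 2) (half_pos hr)).ne'
  rw [mem_ball] at hz
  calc ν.real (closedBall x (2 * r)) ≤ ν.real (closedBall z (5 * (r / 2))) :=
        measureReal_mono (closedBall_subset_closedBall' (by rw [dist_comm]; linarith))
    _ ≤ D * ν.real (closedBall z (r / 2)) := hD z hzS _ (half_pos hr)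
    _ ≤ D * ν.real (closedBall x r) := mul_le_mul_of_nonneg_left
        (measureReal_mono (closedBall_subset_closedBall' (by linarith))) hD0

lemma real_closedBall_inter_le_of_forall_mem [IsFiniteMeasure ν]
    (hS : ∀ U, MeasurableSet U → ν U ≠ 0 → (U ∩ S).Nonempty) (hD : 1 ≤ D)
    (hx : ν.real (closedBall x (2 * r)) ≤ D * ν.real (closedBall x r)) (hδ : 0 < δ) (hα : 0 ≤ α)
    (hdec : ∀ z ∈ S, ∀ ε, 0 < ε → ε ≤ δ →
      ν.real (closedBall z (ε * r)) ≤ (ε / δ) ^ α * ν.real (closedBall z r))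
    (hε : 0 < ε) (y : F) :
    ν.real (closedBall y (ε * r) ∩ closedBall x r) ≤
      (2 / δ) ^ α * D * ε ^ α * ν.real (closedBall x r) := by
  have : 0 ≤ D := by linarith
  have hconst : (2 / δ) ^ α * D * ε ^ α = (2 * ε / δ) ^ α * D := by
    rw [mul_div_right_comm, Real.mul_rpow (by positivity) hε.le]
    ring
  rw [hconst, mul_assoc]
  rcases le_total δ (2 * ε) with hlarge | hsmall
  · calc ν.real (closedBall y (ε * r) ∩ closedBall x r) ≤ 1 * (1 * ν.real (closedBall x r)) := by
          simpa only [one_mul] using measureReal_mono Set.inter_subset_right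
      _ ≤ (2 * ε / δ) ^ α * (D * ν.real (closedBall x r)) := by
          gcongr
          exact Real.one_le_rpow ((one_le_div hδ).2 hlarge) hα
  · rcases eq_or_ne (ν (closedBall y (ε * r) ∩ closedBall x r)) 0 with hzero | hne
    · rw [Measure.real, hzero, ENNReal.toReal_zero]
      positivity
    obtain ⟨z, ⟨hzy, hzx⟩, hzS⟩ :=
      hS _ (measurableSet_closedBall.inter measurableSet_closedBall) hne
    rw [mem_closedBall] at hzy hzx
    calc ν.real (closedBall y (ε * r) ∩ closedBall x r) ≤ ν.real (closedBall z (2 * ε * r)) :=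
          measureReal_mono (Set.inter_subset_left.trans
            (closedBall_subset_closedBall' (by rw [dist_comm]; linarith)))
      _ ≤ (2 * ε / δ) ^ α * ν.real (closedBall z r) := hdec z hzS _ (by positivity) hsmall
      _ ≤ (2 * ε / δ) ^ α * ν.real (closedBall x (2 * r)) := by
          gcongr
          · finiteness
          · exact closedBall_subset_closedBall' (by linarith)
      _ ≤ (2 * ε / δ) ^ α * (D * ν.real (closedBall x r)) := by gcongr

lemma exists_forall_isDoublingDecaying_map {ι : Type*} [MeasurableSpace ι] {b C c θ : ℝ}
    {m : Measure (ℕ → ι)} [IsFiniteMeasure m] (hm : IsBalanced b m) (hb0 : 0 < b) (hb1 : b < 1)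
    (hC : 1 ≤ C) (hc0 : 0 < c) (hc1 : c < 1) (hθ0 : 0 ≤ θ) (hθ1 : θ < 1) :
    ∃ C₁ C₂ α : ℝ, 0 < C₁ ∧ 0 < C₂ ∧ 0 < α ∧ ∀ (π : (ℕ → ι) → F) (ℓ : ℕ → (ℕ → ι) → ℝ),
      IsCantorCoding C c θ π ℓ → Measurable π → IsDoublingDecaying C₁ C₂ α (m.map π) := by
  obtain ⟨k, hk⟩ : ∃ k : ℕ, 5 * C ^ 2 * θ ^ k ≤ c := by
    obtain ⟨k, hk⟩ := exists_forall_ge_pow_mul_le hθ0 hθ1 (5 * C ^ 2) hc0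
    exact ⟨k, mul_comm (θ ^ k) _ ▸ hk k le_rfl⟩
  have hD : 1 ≤ b⁻¹ ^ k := one_le_pow₀ ((one_le_inv₀ hb0).2 hb1.le)
  have hα : 0 < Real.logb c (1 - b) :=
    Real.logb_pos_of_base_lt_one hc0 hc1 (sub_pos.2 hb1) (by linarith)
  have hC0 : 0 < C := by linarith
  refine ⟨b⁻¹ ^ k, (2 / (c ^ 3 / C ^ 2)) ^ Real.logb c (1 - b) * b⁻¹ ^ k, Real.logb c (1 - b),
    by positivity, by positivity, hα, fun π ℓ h hπ => ?_⟩
  have hmap : ∀ z s, (m.map π).real (closedBall z s) = m.real (π ⁻¹' closedBall z s) := fun z s =>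
    map_measureReal_apply hπ measurableSet_closedBall
  have hrange : ∀ U, MeasurableSet U → m.map π U ≠ 0 → (U ∩ Set.range π).Nonempty := by
    intro U hU hne
    rw [Measure.map_apply hπ hU] at hne
    obtain ⟨t, ht⟩ := nonempty_of_measure_ne_zero hne
    exact ⟨π t, ht, t, rfl⟩
  have hdoub : ∀ x ∈ msupport (m.map π), ∀ r : ℝ, 0 < r → (m.map π).real (closedBall x (2 * r)) ≤
      b⁻¹ ^ k * (m.map π).real (closedBall x r) := fun x hx r hr =>
    real_closedBall_two_mul_le_of_forall_mem hrange (by positivity)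
      (Set.forall_mem_range.2 fun t s hs => by
        rw [hmap, hmap]
        exact h.real_preimage_closedBall_mul_le hm hb0 hC0.le hθ0 hθ1 (by norm_num) hk t hs) hx hr
  refine ⟨fun x hx r hr => measure_le_ofReal_mul (by positivity) (hdoub x hx r hr),
    fun x hx y r ε hr hr1 hε => measure_le_ofReal_mul (by positivity) ?_⟩
  exact real_closedBall_inter_le_of_forall_mem hrange hD (hdoub x hx r hr) (by positivity) hα.le
    (Set.forall_mem_range.2 fun t ε hε hεc => by
      rw [hmap, hmap]
      exact h.real_preimage_closedBall_mul_le_rpow hm hb0 hb1 hC hc0 hc1 hθ0 hθ1 t hr hr1 hε hεc)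
    hε y

end DoublingDecay

section CodedFibres

variable {κ X : Type*} [MetricSpace X] {K : Set X} {M η : ℝ} {f : κ → X → X}

lemma HasBoundedDistortion.exists_ratio_wordMap (h : HasBoundedDistortion K M η f) (n : ℕ)
    (z : ℕ → κ) : ∃ ℓ, IsQuasiSimilarityOn K M η (wordMap f n z) ℓ := by
  rw [wordMap_eq_listMap]
  exact h _

lemma HasBoundedDistortion.exists_forall_le_ratio [Finite κ] (h : HasBoundedDistortion K M η f) :
    ∃ δ > 0, ∀ a, ∃ ℓ ≥ δ, IsQuasiSimilarityOn K M η (f a) ℓ := by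
  choose ℓ hℓ using fun a => h [a]
  rcases isEmpty_or_nonempty κ with hκ | hκ
  · exact ⟨1, one_pos, fun a => hκ.elim a⟩
  · obtain ⟨b, hb⟩ := Finite.exists_min ℓ
    exact ⟨ℓ b, (hℓ b).pos, fun a => ⟨ℓ a, hb a, hℓ a⟩⟩

variable [Finite κ] [Nonempty X] [CompleteSpace X] {ρ : NNReal} {n : ℕ} {z z' : ℕ → κ} {ℓ : ℝ}

lemma dist_codeMap_le_of_mem_cylinder (hf : ∀ a, ContractingWith ρ (f a))
    (hKm : ∀ a, Set.MapsTo (f a) K K) (hKc : IsClosed K) (hKb : Bornology.IsBounded K)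
    (hKn : K.Nonempty) (hM : 0 ≤ M) (hℓ : IsQuasiSimilarityOn K M η (wordMap f n z) ℓ)
    (hz : z' ∈ PiNat.cylinder z n) : dist (codeMap f z') (codeMap f z) ≤ M * ℓ * diam K := by
  have hcode := codeMap_mem hf hKm hKc hKn
  have hpos := hℓ.pos
  rw [codeMap_eq_wordMap hf n z', codeMap_eq_wordMap hf n z, wordMap_congr hz]
  refine (hℓ.dist_le _ (hcode _) _ (hcode _)).trans ?_
  gcongr
  exact dist_le_diam_of_mem hKb (hcode _) (hcode _)

lemma mul_le_dist_codeMap_of_mem_cylinder (hf : ∀ a, ContractingWith ρ (f a))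
    (hKm : ∀ a, Set.MapsTo (f a) K K) (hKc : IsClosed K) (hKn : K.Nonempty)
    (hℓ : IsQuasiSimilarityOn K M η (wordMap f n z) ℓ) (hz : z' ∈ PiNat.cylinder z n) {D : ℝ}
    (hD : ∀ x ∈ K, ∀ y ∈ K, D ≤ dist (f (z' n) x) (f (z n) y) ∧ dist (f (z' n) x) (f (z n) y) ≤ η) :
    ℓ * D ≤ M * dist (codeMap f z') (codeMap f z) := by
  have hcode := codeMap_mem hf hKm hKc hKn
  obtain ⟨hsep, hclose⟩ := hD (codeMap f fun i => z' (n + (1 + i))) (hcode _)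
    (codeMap f fun i => z (n + (1 + i))) (hcode _)
  rw [codeMap_eq_wordMap hf n z', codeMap_eq_wordMap hf n z, wordMap_congr hz,
    codeMap_eq_wordMap hf 1 fun i => z' (n + i), codeMap_eq_wordMap hf 1 fun i => z (n + i)]
  exact (mul_le_mul_of_nonneg_left hsep hℓ.pos.le).trans
    (hℓ.le_dist _ (hKm _ (hcode _)) _ (hKm _ (hcode _)) hclose)

lemma isCantorCoding_codeMap {ι : Type*} [Nontrivial ι] (hf : ∀ a, ContractingWith ρ (f a))
    (hKm : ∀ a, Set.MapsTo (f a) K K) (hKc : IsClosed K) (hKb : Bornology.IsBounded K)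
    (hKn : K.Nonempty) (hM : 0 < M) {C c D δ : ℝ} (hD : 0 < D) (hCK : M * diam K ≤ C)
    (hCM : M ^ 2 ≤ C) (hcM : c * M ≤ 1) (hcD : c * M ≤ D) (hcδ : c * M ^ 3 ≤ δ)
    (hδ : ∀ a, ∃ ℓ ≥ δ, IsQuasiSimilarityOn K M η (f a) ℓ) {ℓ : ℕ → (ℕ → κ) → ℝ}
    (hℓ : ∀ n z, IsQuasiSimilarityOn K M η (wordMap f n z) (ℓ n z)) {s : ℕ → ι → κ}
    (hs : ∀ n i j, i ≠ j → ∀ x ∈ K, ∀ y ∈ K,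
      D ≤ dist (f (s n i) x) (f (s n j) y) ∧ dist (f (s n i) x) (f (s n j) y) ≤ η) :
    IsCantorCoding C c ρ (fun t => codeMap f fun n => s n (t n))
      fun n t => ℓ n fun i => s i (t i) := by
  have hmem {n : ℕ} {t t' : ℕ → ι} (ht : t' ∈ PiNat.cylinder t n) :
      (fun i => s i (t' i)) ∈ PiNat.cylinder (fun i => s i (t i)) n :=
    fun i hi => congrArg (s i) (ht i hi)
  have hℓ0 (n : ℕ) (t : ℕ → ι) := (hℓ n fun i => s i (t i)).pos
  obtain ⟨x₀, hx₀⟩ := hKn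
  obtain ⟨i, j, hij⟩ := exists_pair_ne ι
  obtain ⟨hsep, hclose⟩ := hs 0 i j hij x₀ hx₀ x₀ hx₀
  have hx := hKm (s 0 i) hx₀
  have hy := hKm (s 0 j) hx₀
  have hpos := hD.trans_le hsep
  refine ⟨hℓ0, fun n t t' ht => ?_, fun n t t' ht hne => ?_, fun t => ?_, fun n t => ?_,
    fun n k t => ?_⟩
  · refine (dist_codeMap_le_of_mem_cylinder hf hKm hKc hKb ⟨x₀, hx₀⟩ hM.le (hℓ n _)
      (hmem ht)).trans ?_
    nlinarith [hℓ0 n t]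
  · have hdist := mul_le_dist_codeMap_of_mem_cylinder hf hKm hKc ⟨x₀, hx₀⟩ (hℓ n _) (hmem ht)
      (hs n _ _ hne)
    exact le_of_mul_le_mul_left (by nlinarith [hℓ0 n t]) hM
  · nlinarith [hℓ0 0 t, (hℓ 0 fun i => s i (t i)).one_le_ratio_id hx hy hpos]
  · obtain ⟨ℓ₁, hℓ₁, hletter⟩ := hδ (s n (t n))
    have hsucc := hℓ (n + 1) fun i => s i (t i)
    rw [funext (wordMap_succ_apply f n _)] at hsucc
    have hmul := hsucc.mul_le_ratio_comp (hℓ n _) hletter (hKm _) (hf _).2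
      (hf (s n (t n))).1.le hM.le hx hy hpos hclose
    exact le_of_mul_le_mul_left (by nlinarith [hℓ0 n t]) (pow_pos hM 3)
  · have hadd := hℓ (n + k) fun i => s i (t i)
    rw [wordMap_add] at hadd
    refine (hadd.ratio_comp_le (hℓ n _) (mapsTo_wordMap hKm k _)
      (lipschitzWith_wordMap (fun a => (hf a).2) k _) hM.le hx hy hpos hclose).trans ?_
    rw [NNReal.coe_pow]
    have := hℓ0 n t
    gcongr

lemma exists_forall_isCantorCoding {ι : Type*} [Nontrivial ι] (hf : ∀ a, ContractingWith ρ (f a))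
    (hKm : ∀ a, Set.MapsTo (f a) K K) (hKc : IsClosed K) (hKb : Bornology.IsBounded K)
    (hKn : K.Nonempty) (hM : 0 < M) (hdist : HasBoundedDistortion K M η f) {D : ℝ} (hD : 0 < D) :
    ∃ C c : ℝ, 1 ≤ C ∧ 0 < c ∧ c < 1 ∧ ∀ s : ℕ → ι → κ,
      (∀ n i j, i ≠ j → ∀ x ∈ K, ∀ y ∈ K,
        D ≤ dist (f (s n i) x) (f (s n j) y) ∧ dist (f (s n i) x) (f (s n j) y) ≤ η) →
      ∃ ℓ, IsCantorCoding C c ρ (fun t => codeMap f fun n => s n (t n)) ℓ := by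
  obtain ⟨δ, hδ, hletter⟩ := hdist.exists_forall_le_ratio
  choose ℓ hℓ using hdist.exists_ratio_wordMap
  obtain ⟨C, hC1, hCK, hCM⟩ : ∃ C, 1 ≤ C ∧ M * diam K ≤ C ∧ M ^ 2 ≤ C :=
    ⟨max 1 (max (M * diam K) (M ^ 2)), by simp⟩
  obtain ⟨c, hc0, hc1, hcM, hcD, hcδ⟩ :
      ∃ c, 0 < c ∧ c < 1 ∧ c ≤ 1 / M ∧ c ≤ D / M ∧ c ≤ δ / M ^ 3 :=
    ⟨min (1 / 2) (min (1 / M) (min (D / M) (δ / M ^ 3))), by positivity,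
      (min_le_left _ _).trans_lt one_half_lt_one, by simp⟩
  rw [le_div_iff₀ (by positivity)] at hcM hcD hcδ
  exact ⟨C, c, hC1, hc0, hc1, fun s hs => ⟨_, isCantorCoding_codeMap hf hKm hKc hKb hKn hM hD
    hCK hCM hcM hcD hcδ hletter hℓ hs⟩⟩

end CodedFibres

section Pairing

variable {W : Type*} [Finite W] [Nonempty W] [MeasurableSpace W] [MeasurableSingletonClass W]

lemma exists_measurePreserving_pair (P : Measure W) [IsProbabilityMeasure P]
    (hP : ∀ w, P {w} ≠ 0) (σ : W → W) :
    ∃ (Q : Measure (W × Bool)) (β : Measure Bool) (k : (W × Bool) × Bool → W),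
      IsProbabilityMeasure Q ∧ IsProbabilityMeasure β ∧ (∀ b, β {b} ≠ 0) ∧
      MeasurePreserving k (Q.prod β) P ∧
      ∀ y b b', b ≠ b' → ∃ w, s(k (y, b), k (y, b')) = s(w, σ w) := by
  let e : W × Bool → W := fun y => cond y.2 (σ y.1) y.1
  obtain ⟨M, hM, hM0, heM⟩ := exists_measurePreserving_of_surjective
    (e := e) (fun w => ⟨(w, false), rfl⟩) P hP
  obtain ⟨Q, β, hQ, hβ, hβ0, hflip⟩ := exists_measurePreserving_randomFlip
    (ι := fun y : W × Bool => (y.1, !y.2)) (fun y => by simp) M hM0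
  refine ⟨Q, β, _, hQ, hβ, hβ0, heM.comp hflip, ?_⟩
  rintro ⟨w, a⟩ b b' hne
  refine ⟨w, ?_⟩
  cases a <;> cases b <;> cases b' <;> simp_all [e, Sym2.eq_swap]

end Pairing

section Disintegration

/-- The probability measures `ν ω` form a disintegration of `μ` over the probability space
`(Ω, ℙ)`. -/
structure IsDisintegration {Ω X : Type*} [MeasurableSpace Ω] [MeasurableSpace X] (ℙ : Measure Ω)
    (ν : Ω → Measure X) (μ : Measure X) : Prop where
  isProbabilityMeasure (ω) : IsProbabilityMeasure (ν ω)
  measurable_apply (S) : MeasurableSet S → Measurable fun ω => ν ω S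
  measure_eq_lintegral (S) : MeasurableSet S → μ S = ∫⁻ ω, ν ω S ∂ℙ

lemma isDisintegration_map_prodMk {Ω T X : Type*} [MeasurableSpace Ω] [MeasurableSpace T]
    [MeasurableSpace X] {ℙ : Measure Ω} {L : Measure T} [IsProbabilityMeasure L] {μ : Measure X}
    {π : Ω × T → X} (hπ : MeasurePreserving π (ℙ.prod L) μ) :
    IsDisintegration ℙ (fun ω => L.map fun t => π (ω, t)) μ := by
  have hmeas (ω : Ω) : Measurable fun t => π (ω, t) := hπ.measurable.comp measurable_prodMk_left
  refine ⟨fun ω => Measure.isProbabilityMeasure_map (hmeas ω).aemeasurable, fun S hS => ?_,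
    fun S hS => ?_⟩
  · simp only [Measure.map_apply (hmeas _) hS]
    exact measurable_measure_prodMk_left (hπ.measurable hS)
  · simp only [Measure.map_apply (hmeas _) hS]
    rw [← hπ.measure_preimage hS.nullMeasurableSet, Measure.prod_apply (hπ.measurable hS)]
    rfl

end Disintegration

section PairedIFS

variable {F : Type*} [NormedAddCommGroup F] [CompleteSpace F] [MeasurableSpace F] [BorelSpace F]
  {μ : Measure F} [IsProbabilityMeasure μ] {K : Set F} {M η : ℝ} {ρ : NNReal}

lemma exists_isDisintegration_of_separated_pairs {W : Type*} [Finite W] [MeasurableSpace W]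
    [MeasurableSingletonClass W] {g : W → F → F} (hg : ∀ w, ContractingWith ρ (g w))
    (hKm : ∀ w, Set.MapsTo (g w) K K) (hKc : IsClosed K) (hKb : Bornology.IsBounded K)
    (hKn : K.Nonempty) (hM : 0 < M) (hdist : HasBoundedDistortion K M η g) {P : Measure W}
    [IsProbabilityMeasure P] (hP : ∀ w, P {w} ≠ 0) (hμ : IsStationaryMeasure P g μ) {σ : W → W}
    {D : ℝ} (hD : 0 < D) (hσ : ∀ w, ∀ x ∈ K, ∀ y ∈ K,
      D ≤ dist (g w x) (g (σ w) y) ∧ dist (g w x) (g (σ w) y) ≤ η) :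
    ∃ (ℙ : Measure (ℕ → W × Bool)) (ν : (ℕ → W × Bool) → Measure F) (C₁ C₂ α : ℝ),
      IsProbabilityMeasure ℙ ∧ IsDisintegration ℙ ν μ ∧ 0 < C₁ ∧ 0 < C₂ ∧ 0 < α ∧
      ∀ ω, IsDoublingDecaying C₁ C₂ α (ν ω) := by
  have hW := nonempty_of_isProbabilityMeasure P
  obtain ⟨Q, β, k, hQ, hβ, hβ0, hk, hpair⟩ := exists_measurePreserving_pair P hP σ
  have hh (q : (W × Bool) × Bool) : ContractingWith ρ (g (k q)) := hg (k q)
  have hmp := ((hμ.comp hk).measurePreserving_codeMap hh).comp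
    (measurePreserving_zip_infinitePi Q β)
  obtain ⟨b, hb0, hb1, hbal⟩ := exists_isBalanced_infinitePi hβ0
  obtain ⟨C, c, hC, hc0, hc1, hcode⟩ := exists_forall_isCantorCoding (ι := Bool) hh
    (fun q => hKm (k q)) hKc hKb hKn hM
    (hdist.of_words (f := fun q => g (k q)) (wd := fun q => [k q]) fun _ => rfl) hD
  obtain ⟨C₁, C₂, α, hC₁, hC₂, hα, hdd⟩ := exists_forall_isDoublingDecaying_map (F := F) hbal hb0
    hb1 hC hc0 hc1 ρ.coe_nonneg (hg hW.some).1
  refine ⟨_, _, C₁, C₂, α, inferInstance, isDisintegration_map_prodMk hmp, hC₁, hC₂, hα,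
    fun ω => ?_⟩
  obtain ⟨ℓ, hℓ⟩ := hcode (fun n i => (ω n, i)) fun n i j hij x hx y hy => by
    obtain ⟨w, hw⟩ := hpair (ω n) i j hij
    rcases Sym2.eq_iff.1 hw with ⟨hi, hj⟩ | ⟨hi, hj⟩
    · simpa only [hi, hj] using hσ w x hx y hy
    · simpa only [hi, hj, dist_comm] using hσ w y hy x hx
  exact hdd _ ℓ hℓ (hmp.measurable.comp measurable_prodMk_left)

end PairedIFS

section FiniteIFS

variable {F : Type*} [NormedAddCommGroup F] [MeasurableSpace F] [BorelSpace F]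
  {μ : Measure F} [IsProbabilityMeasure μ] [NullSingletonClass μ]

lemma exists_isDisintegration_of_hasBoundedDistortion {ι : Type*} [Finite ι] [MeasurableSpace ι]
    [MeasurableSingletonClass ι] [CompleteSpace F] {K : Set F} {M η : ℝ} {ρ : NNReal}
    {f : ι → F → F} (hf : ∀ i, ContractingWith ρ (f i)) (hKm : ∀ i, Set.MapsTo (f i) K K)
    (hKc : IsClosed K) (hKb : Bornology.IsBounded K) (hKn : K.Nonempty) (hM : 0 < M) (hη : 0 < η)
    (hdist : HasBoundedDistortion K M η f) {P : Measure ι} [IsProbabilityMeasure P]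
    (hP : ∀ i, P {i} ≠ 0) (hμ : IsStationaryMeasure P f μ) :
    ∃ (n : ℕ) (ℙ : Measure (ℕ → (Fin n → ι) × Bool)) (ν : (ℕ → (Fin n → ι) × Bool) → Measure F)
      (C₁ C₂ α : ℝ), IsProbabilityMeasure ℙ ∧ IsDisintegration ℙ ν μ ∧ 0 < C₁ ∧ 0 < C₂ ∧ 0 < α ∧
      ∀ ω, IsDoublingDecaying C₁ C₂ α (ν ω) := by
  have hι := nonempty_of_isProbabilityMeasure P
  obtain ⟨n, hn, D, hD, σ, hσ⟩ := exists_separated_blocks hf hKm hKc hKb hKn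
    (exists_mem_cylinder_ne_of_measurePreserving (hμ.measurePreserving_codeMap hf) hP) hη
  have hcontr (w : Fin n → ι) : ContractingWith (ρ ^ n) (listMap f (List.ofFn w)) :=
    ⟨pow_lt_one₀ zero_le (hf hι.some).1 hn, by
      simpa only [List.length_ofFn] using lipschitzWith_listMap (fun i => (hf i).2) (List.ofFn w)⟩
  have hpi (w : Fin n → ι) : (Measure.pi fun _ : Fin n => P) {w} ≠ 0 := by
    rw [Measure.pi_singleton]
    exact Finset.prod_ne_zero_iff.2 fun i _ => hP (w i)
  exact ⟨n, exists_isDisintegration_of_separated_pairs hcontr (fun w => mapsTo_listMap hKm _) hKc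
    hKb hKn hM (hdist.of_words fun _ => rfl) hpi (hμ.pi n) hD hσ⟩

end FiniteIFS

theorem self_conformal_disintegration_general {A F : Type*} [Fintype A] [NormedAddCommGroup F]
    [NormedSpace ℝ F] [FiniteDimensional ℝ F] [MeasurableSpace F] [BorelSpace F] (φ : A → F → F)
    (hΦ : IsSelfConformalIFS φ) (p : A → ℝ) (hp : ∀ a, 0 < p a) (hp1 : ∑ a, p a = 1)
    (μ : Measure F) [IsProbabilityMeasure μ]
    (hstat : μ = ∑ a, ENNReal.ofReal (p a) • Measure.map (φ a) μ) (hna : ∀ x, μ {x} = 0) :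
    ∃ (Ω : Type) (_ : MeasurableSpace Ω) (ℙ : Measure Ω) (_ : IsProbabilityMeasure ℙ)
      (μω : Ω → Measure F), IsDisintegration ℙ μω μ ∧ ∃ C₁ C₂ α : ℝ, 0 < C₁ ∧ 0 < C₂ ∧ 0 < α ∧
        ∀ ω, IsDoublingDecaying C₁ C₂ α (μω ω) := by
  have : CompleteSpace F := FiniteDimensional.complete ℝ F
  have : NullSingletonClass μ := ⟨hna⟩
  let e := (Fintype.equivFin A).symm
  obtain ⟨ρ, hρ⟩ := hΦ.exists_contractingWith
  obtain ⟨R, hR, hK⟩ := exists_mapsTo_closedBall hρ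
  obtain ⟨M, η, hM, hη, hdist⟩ := hΦ.exists_hasBoundedDistortion hR hK
  let P : Measure (Fin (Fintype.card A)) := ∑ i, ENNReal.ofReal (p (e i)) • Measure.dirac i
  have hP (i) : P {i} ≠ 0 := by
    rw [sum_smul_dirac_singleton]
    exact (ENNReal.ofReal_pos.2 (hp _)).ne'
  have hP1 : IsProbabilityMeasure P := ⟨by
    simp [P, ← ENNReal.ofReal_sum_of_nonneg fun i _ => (hp (e i)).le, e.sum_comp, hp1]⟩
  have hμ : IsStationaryMeasure P (fun i => φ (e i)) μ :=
    isStationaryMeasure_sum_dirac (fun i => (hΦ.2.2.1 (e i)).continuous.measurable)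
      (hstat.trans (e.sum_comp fun a => ENNReal.ofReal (p a) • μ.map (φ a)).symm)
  obtain ⟨n, ℙ, ν, C₁, C₂, α, hℙ, hν, hC⟩ := exists_isDisintegration_of_hasBoundedDistortion
    (fun i => hρ (e i)) (fun i => hK (e i)) isClosed_closedBall isBounded_closedBall
    ⟨0, mem_closedBall_self hR⟩ hM hη (hdist.of_words (wd := fun i => [e i]) fun _ => rfl) hP hμ
  exact ⟨_, _, ℙ, hℙ, ν, hν, C₁, C₂, α, hC⟩

/-- Theorem 1 (self-conformal disintegration). -/
theorem self_conformal_disintegration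
    (d : ℕ) {A : Type*} [Fintype A]
    (φ : A → EuclideanSpace ℝ (Fin d) → EuclideanSpace ℝ (Fin d))
    (hΦ : IsSelfConformalIFS φ)
    (p : A → ℝ) (hp : ∀ a, 0 < p a) (hp1 : ∑ a, p a = 1)
    (μ : Measure (EuclideanSpace ℝ (Fin d))) [IsProbabilityMeasure μ]
    (hstat : μ = ∑ a, ENNReal.ofReal (p a) • Measure.map (φ a) μ)
    (hna : ∀ x, μ {x} = 0) :
    ∃ (Ω : Type) (_ : MeasurableSpace Ω) (ℙ : Measure Ω) (_ : IsProbabilityMeasure ℙ)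
      (μω : Ω → Measure (EuclideanSpace ℝ (Fin d))),
      (∀ ω, IsProbabilityMeasure (μω ω)) ∧
      (∀ S : Set (EuclideanSpace ℝ (Fin d)), MeasurableSet S →
        Measurable fun ω => μω ω S) ∧
      (∀ S : Set (EuclideanSpace ℝ (Fin d)), MeasurableSet S →
        μ S = ∫⁻ ω, μω ω S ∂ℙ) ∧
      ∃ C₁ C₂ α : ℝ, 0 < C₁ ∧ 0 < C₂ ∧ 0 < α ∧
        (∀ ω, ∀ x ∈ msupport (μω ω), ∀ r : ℝ, 0 < r →
          μω ω (Metric.closedBall x (2 * r)) ≤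
            ENNReal.ofReal C₁ * μω ω (Metric.closedBall x r)) ∧
        (∀ ω, ∀ x ∈ msupport (μω ω), ∀ (y : EuclideanSpace ℝ (Fin d)) (r ε : ℝ),
          0 < r → r ≤ 1 → 0 < ε →
          μω ω (Metric.closedBall y (ε * r) ∩ Metric.closedBall x r) ≤
            ENNReal.ofReal (C₂ * ε ^ α) * μω ω (Metric.closedBall x r)) := by
  obtain ⟨Ω, _, ℙ, hℙ, μω, hμω, C₁, C₂, α, hC₁, hC₂, hα, h⟩ :=
    self_conformal_disintegration_general φ hΦ p hp hp1 μ hstat hna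
  exact ⟨Ω, _, ℙ, hℙ, μω, hμω.1, hμω.2, hμω.3, C₁, C₂, α, hC₁, hC₂, hα, fun ω => (h ω).1,
    fun ω => (h ω).2⟩
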